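/- Let K be a field equipped with two commuting ring endomorphisms φ and σ such that every a ∈ K with φ^m(a) = a for some m ≥ 1 satisfies φ(a) = a (K^{φ^∞} = K^φ), and σ maps the subfield k := K^φ onto itself. Let R be a commutative K-algebra with commuting ring endomorphisms Φ and Σ extending φ and σ through the algebra map, such that R is Φ-simple, R is a Φ-pseudo domain, and R is finitely σ-generated over K (R is generated as a K-algebra by {Σ^n(x) | x ∈ T, n ≥ 0} for some finite T ⊆ R). Then the ring of Φ-constants R^Φ = {r ∈ R | Φ(r) = r} satisfies: (1) R^Φ is a field, stable under Σ; (2) R^Φ is finitely σ-generated as a σ-field extension of k: there is a finite set S ⊆ R^Φ such that every element of R^Φ is a quotient a · b^{-1} of elements a, b of the subring of R^Φ generated by the image of k and {Σ^n(s) | s ∈ S, n ≥ 0}; and (3) R^Φ is constrained over k: for every finite tuple c of elements of R^Φ there exists a nonzero b ∈ R^Φ such that the zero ideal is the only σ-pseudo prime ideal (with respect to the restriction of Σ) of the subring of R^Φ generated by the image of k together with {Σ^n(c_j)} for all n ≥ 0 and all coordinates c_j of c and {Σ^n(b^{-1}) | n ≥ 0}. -/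

import Mathlib

/-- A `φ`-ring `R` is `φ`-simple if the zero ideal and the whole ring are its only
`φ`-ideals (ideals `I` with `φ(I) ⊆ I`). -/
def DiffSimple {R : Type*} [CommRing R] (φ : R →+* R) : Prop :=
  (⊥ : Ideal R) ≠ ⊤ ∧ ∀ I : Ideal R, (∀ x ∈ I, φ x ∈ I) → I = ⊥ ∨ I = ⊤

/-- An ideal `p` of a ring with endomorphism `σ` is `σ`-pseudo prime if
`p = q ∩ σ⁻¹(q) ∩ … ∩ σ^{-(d-1)}(q)` for some `d ≥ 1` and some `σ^d`-prime ideal `q`. -/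
def PseudoPrime {R : Type*} [CommRing R] (σ : R →+* R) (p : Ideal R) : Prop :=
  ∃ d : ℕ, 1 ≤ d ∧ ∃ q : Ideal R, q.IsPrime ∧ Ideal.comap (σ ^ d) q = q ∧
    p = ⨅ i ∈ Finset.range d, Ideal.comap (σ ^ i) q

/-- A ring with endomorphism `φ` is a `φ`-pseudo domain if its zero ideal is
`φ`-pseudo prime. -/
def PseudoDomain {R : Type*} [CommRing R] (φ : R →+* R) : Prop :=
  PseudoPrime φ (⊥ : Ideal R)

/-- The subring of `R` generated by the image of `K^φ` together with the `σ'`-orbits of a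
set `gens ⊆ R`. -/
def genSubring {K R : Type*} [CommRing K] [CommRing R] [Algebra K R]
    (φ : K →+* K) (σ' : R →+* R) (gens : Set R) : Subring R :=
  Subring.closure ({z : R | ∃ c : K, φ c = c ∧ algebraMap K R c = z} ∪
    {z : R | ∃ g ∈ gens, ∃ n : ℕ, (⇑σ')^[n] g = z})

universe u v w

theorem exists_comap_pow_eq_of_mem_minimalPrimes {C : Type*} [CommRing C]
    (hfin : (minimalPrimes C).Finite) (ψ : C →+* C) (hψ : Function.Injective ψ)
    {p : Ideal C} (hp : p ∈ minimalPrimes C) :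
    ∃ m, 1 ≤ m ∧ p.comap (ψ ^ m) = p := by
  have lift : ∀ p : minimalPrimes C, ∃ p' : minimalPrimes C, p'.1.comap ψ = p.1 := by
    rintro ⟨p, hp⟩
    obtain ⟨q, hq, hqp⟩ :=
      Ideal.exists_comap_eq_of_mem_minimalPrimes_of_injective hψ p hp
    obtain ⟨r, hr, hrq⟩ := Ideal.exists_minimalPrimes_le (I := (⊥ : Ideal C)) (J := q) bot_le
    refine ⟨⟨r, hr⟩, le_antisymm ?_ ?_⟩
    · exact hqp ▸ Ideal.comap_mono hrq
    · have := hr.1.1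
      exact hp.2 ⟨Ideal.comap_isPrime ψ r, bot_le⟩ (hqp ▸ Ideal.comap_mono hrq)
  choose g hg using lift
  have hginj : Function.Injective g := fun a b h => Subtype.ext (by rw [← hg a, ← hg b, h])
  have : Finite (minimalPrimes C) := hfin
  obtain ⟨m, hm, hper⟩ := hginj.mem_periodicPts ⟨p, hp⟩
  refine ⟨m, hm, ?_⟩
  have key : ∀ n (a : minimalPrimes C), ((g^[n] a).1).comap (ψ ^ n) = a.1 := by
    intro n
    induction n with
    | zero => intro a; exact Ideal.comap_id a.1
    | succ n ih =>
      intro a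
      rw [Function.iterate_succ_apply, pow_succ]
      change Ideal.comap ((ψ ^ n).comp ψ) _ = _
      rw [← Ideal.comap_comap, ih, hg]
  have := key m ⟨p, hp⟩
  rwa [hper.eq] at this

section

open scoped TensorProduct

variable {k K A : Type*} [Field k] [Field K] [Algebra k K] [CommRing A] [Algebra k A]

theorem repr_tensor_map {ι : Type*} (b : Module.Basis ι k A) (φ : K →ₐ[k] K) (x : K ⊗[k] A) (i : ι) :
    (Algebra.TensorProduct.basis K b).repr (Algebra.TensorProduct.map φ (AlgHom.id k A) x) i =
      φ ((Algebra.TensorProduct.basis K b).repr x i) := by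
  induction x with
  | zero => simp
  | tmul a m => simp [Algebra.TensorProduct.basis_repr_tmul]
  | add x y hx hy => simp [hx, hy]

theorem exists_one_tmul_mem_of_stable (φ : K →ₐ[k] K)
    (hfix : ∀ a, φ a = a → a ∈ Set.range (algebraMap k K)) (I : Ideal (K ⊗[k] A))
    (hI : ∀ x ∈ I, Algebra.TensorProduct.map φ (AlgHom.id k A) x ∈ I) (hne : I ≠ ⊥) :
    ∃ a : A, a ≠ 0 ∧ (1 : K) ⊗ₜ[k] a ∈ I := by
  let b := Module.Basis.ofVectorSpace k A
  let B := Algebra.TensorProduct.basis K b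
  have hex : ∃ n, ∃ x ∈ I, x ≠ 0 ∧ (B.repr x).support.card = n := by
    obtain ⟨x, hx, hx0⟩ := Submodule.exists_mem_ne_zero_of_ne_bot hne
    exact ⟨_, x, hx, hx0, rfl⟩
  classical
  obtain ⟨x, hx, hx0, hn⟩ := Nat.find_spec hex
  have hmin : ∀ y ∈ I, (B.repr y).support.card < (B.repr x).support.card → y = 0 := by
    intro y hy hlt
    by_contra h0
    rw [hn] at hlt
    exact Nat.find_min hex hlt ⟨y, hy, h0, rfl⟩
  obtain ⟨i, hi⟩ : ∃ i, B.repr x i ≠ 0 := by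
    by_contra! h
    exact hx0 (B.repr.map_eq_zero_iff.1 (Finsupp.ext h))
  set c := B.repr x i
  let z := c⁻¹ • x
  have hz : z ∈ I := Submodule.smul_of_tower_mem I c⁻¹ hx
  have hzr : ∀ j, B.repr z j = c⁻¹ * B.repr x j := fun j => by simp [z]
  have hzi : B.repr z i = 1 := by rw [hzr]; exact inv_mul_cancel₀ hi
  have hz0 : Algebra.TensorProduct.map φ (AlgHom.id k A) z - z = 0 := by
    apply hmin _ (I.sub_mem (hI z hz) hz)
    apply Finset.card_lt_card
    refine ⟨fun j hj => ?_, fun h => ?_⟩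
    · rw [Finsupp.mem_support_iff] at hj ⊢
      intro h0
      apply hj
      rw [map_sub, Finsupp.sub_apply, repr_tensor_map]
      change φ (B.repr z j) - B.repr z j = 0
      rw [hzr, h0]; simp
    · have := h (Finsupp.mem_support_iff.2 hi)
      rw [Finsupp.mem_support_iff] at this
      apply this
      rw [map_sub, Finsupp.sub_apply, repr_tensor_map]
      change φ (B.repr z i) - B.repr z i = 0
      rw [hzi]; simp
  have hfixz : ∀ j, φ (B.repr z j) = B.repr z j := by
    intro j
    have := repr_tensor_map b φ z j
    rw [sub_eq_zero.1 hz0] at this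
    exact this.symm
  choose r hr using fun j => hfix _ (hfixz j)
  have hzeq : z = (1 : K) ⊗ₜ[k] (∑ j ∈ (B.repr z).support, r j • b j) := by
    conv_lhs => rw [← B.linearCombination_repr z, Finsupp.linearCombination_apply, Finsupp.sum]
    rw [TensorProduct.tmul_sum]
    refine Finset.sum_congr rfl fun j _ => ?_
    rw [← hr j, algebraMap_smul, TensorProduct.tmul_smul]
    simp [B]
  refine ⟨_, ?_, hzeq ▸ hz⟩
  rintro h0
  rw [h0, TensorProduct.tmul_zero] at hzeq
  rw [hzeq] at hzi
  simp at hzi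

theorem range_map_val_mono {F : Type*} [Field F] [Algebra k F] {F₁ F₂ : Subalgebra k F}
    (h : F₁ ≤ F₂) :
    (Algebra.TensorProduct.map (AlgHom.id k K) F₁.val).range ≤
      (Algebra.TensorProduct.map (AlgHom.id k K) F₂.val).range := by
  rintro _ ⟨x, rfl⟩
  refine ⟨Algebra.TensorProduct.map (AlgHom.id k K) (Subalgebra.inclusion h) x, ?_⟩
  induction x with
  | zero => simp
  | tmul u v => simp
  | add x y hx hy => simp_all

theorem tensorProduct_isDomain_of_fixed (φ : K →ₐ[k] K)
    (hfix : ∀ (m : ℕ) a, 1 ≤ m → (φ ^ m) a = a → a ∈ Set.range (algebraMap k K))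
    (F : Type*) [Field F] [Algebra k F] : IsDomain (K ⊗[k] F) := by
  have fg : ∀ (F₀ : Subalgebra k F), F₀.FG → IsDomain (K ⊗[k] F₀) := by
    intro F₀ hF₀
    have : Algebra.FiniteType k F₀ := F₀.fg_iff_finiteType.1 hF₀
    have : IsNoetherianRing (K ⊗[k] F₀) := Algebra.FiniteType.isNoetherianRing K _
    have : Nontrivial (K ⊗[k] F₀) := inferInstance
    let ψ : K ⊗[k] F₀ →ₐ[k] K ⊗[k] F₀ := Algebra.TensorProduct.map φ (AlgHom.id k F₀)
    have hψpow : ∀ m : ℕ, ψ ^ m = Algebra.TensorProduct.map (φ ^ m) (AlgHom.id k F₀) := by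
      intro m
      induction m with
      | zero => exact Algebra.TensorProduct.map_id.symm
      | succ n ih =>
        rw [pow_succ, ih]
        ext <;> simp [ψ, pow_succ]
    have hψ : Function.Injective ψ := by
      exact Module.Flat.rTensor_preserves_injective_linearMap φ.toLinearMap φ.toRingHom.injective
    obtain ⟨p, hp⟩ := Ideal.nonempty_minimalPrimes (I := (⊥ : Ideal (K ⊗[k] F₀))) bot_ne_top
    obtain ⟨m, hm, hpm⟩ := exists_comap_pow_eq_of_mem_minimalPrimes
      (minimalPrimes.finite_of_isNoetherianRing _) ψ.toRingHom hψ hp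
    have hp0 : p = ⊥ := by
      by_contra hne
      obtain ⟨a, ha, hap⟩ := exists_one_tmul_mem_of_stable (φ ^ m) (hfix m · hm) p (by
        intro x hx
        rw [← hψpow]
        rw [← hpm] at hx
        have h2 : (ψ.toRingHom ^ m) x = (ψ ^ m) x := by
          simp [AlgHom.coe_pow, RingHom.coe_pow]
        rw [← h2]; exact hx) hne
      have hnz : (1 : K) ⊗ₜ[k] a ∈ nonZeroDivisors (K ⊗[k] F₀) := by
        have hinj : Function.Injective (LinearMap.mulLeft k a) := mul_right_injective₀ ha
        have := Module.Flat.lTensor_preserves_injective_linearMap (M := K) _ hinj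
        rw [mem_nonZeroDivisors_iff_right]
        intro x hx
        apply this
        rw [map_zero, ← hx]
        clear hx
        induction x with
        | zero => simp
        | tmul u v => simp [mul_comm]
        | add x y hx hy => simp [add_mul, hx, hy]
      exact Set.disjoint_left.1 (Ideal.disjoint_nonZeroDivisors_of_mem_minimalPrimes hp) hap hnz
    have := hp.1.1
    rw [hp0] at this
    exact IsDomain.of_bot_isPrime _
  have mem : ∀ x : K ⊗[k] F, ∃ F₀ : Subalgebra k F, F₀.FG ∧
      x ∈ (Algebra.TensorProduct.map (AlgHom.id k K) F₀.val).range := by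
    intro x
    induction x with
    | zero => exact ⟨⊥, Subalgebra.fg_bot, zero_mem _⟩
    | tmul u v =>
      refine ⟨Algebra.adjoin k {v}, ⟨{v}, by simp⟩,
        u ⊗ₜ ⟨v, Algebra.subset_adjoin rfl⟩, by simp⟩
    | add x y hx hy =>
      obtain ⟨F₁, h₁, hx⟩ := hx
      obtain ⟨F₂, h₂, hy⟩ := hy
      exact ⟨F₁ ⊔ F₂, h₁.sup h₂, add_mem (range_map_val_mono le_sup_left hx)
        (range_map_val_mono le_sup_right hy)⟩
  have : NoZeroDivisors (K ⊗[k] F) := by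
    refine ⟨fun {x y} hxy => ?_⟩
    obtain ⟨F₁, h₁, hx⟩ := mem x
    obtain ⟨F₂, h₂, hy⟩ := mem y
    obtain ⟨x', rfl⟩ := range_map_val_mono (K := K) (le_sup_left : F₁ ≤ F₁ ⊔ F₂) hx
    obtain ⟨y', rfl⟩ := range_map_val_mono (K := K) (le_sup_right : F₂ ≤ F₁ ⊔ F₂) hy
    have := fg _ (h₁.sup h₂)
    have hinj : Function.Injective
        (Algebra.TensorProduct.map (AlgHom.id k K) (F₁ ⊔ F₂).val).toRingHom :=
      Module.Flat.lTensor_preserves_injective_linearMap (M := K) (F₁ ⊔ F₂).val.toLinearMap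
        Subtype.val_injective
    have h : (Algebra.TensorProduct.map (AlgHom.id k K) (F₁ ⊔ F₂).val).toRingHom (x' * y') = 0 := by
      rw [map_mul]; exact hxy
    rw [map_eq_zero_iff _ hinj, mul_eq_zero] at h
    rcases h with rfl | rfl <;> simp
  exact NoZeroDivisors.to_isDomain _

theorem productMap_injective_of_fixed (φ : K →ₐ[k] K)
    (hfix : ∀ a, φ a = a → a ∈ Set.range (algebraMap k K)) {M : Type*} [CommRing M] [Algebra k M]
    (ψ : M →+* M) (i : K →ₐ[k] M) (j : A →ₐ[k] M) (hj : Function.Injective j)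
    (hi : ∀ a, ψ (i a) = i (φ a)) (hψ : ∀ a, ψ (j a) = j a) :
    Function.Injective (Algebra.TensorProduct.productMap i j) := by
  have hcomm : ∀ x, Algebra.TensorProduct.productMap i j
      (Algebra.TensorProduct.map φ (AlgHom.id k A) x) =
      ψ (Algebra.TensorProduct.productMap i j x) := by
    intro x
    induction x with
    | zero => simp
    | tmul u v => simp [hi, hψ]
    | add x y hx hy => simp [hx, hy]
  rw [← AlgHom.coe_toRingHom, RingHom.injective_iff_ker_eq_bot]
  by_contra hne
  obtain ⟨a, ha, h⟩ := exists_one_tmul_mem_of_stable φ hfix _ (fun x hx => by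
    rw [RingHom.mem_ker] at hx ⊢
    change Algebra.TensorProduct.productMap i j x = 0 at hx
    exact (hcomm x).trans (by rw [hx, map_zero])) hne
  apply ha
  apply hj
  rw [RingHom.mem_ker] at h
  simpa using h

end

section

variable {M : Type*} [Field M]

/-- `z` is a root of a monic polynomial of degree `n` with coefficients in the subfield `F`. -/
def HasMonic (F : Subfield M) (z : M) (n : ℕ) : Prop :=
  ∃ p : Polynomial M, p.Monic ∧ p.natDegree = n ∧ p.eval z = 0 ∧ ∀ i, p.coeff i ∈ F

theorem HasMonic.map {F F' : Subfield M} {z : M} {n : ℕ} (τ : M →+* M)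
    (hF : ∀ x ∈ F, τ x ∈ F') (h : HasMonic F z n) : HasMonic F' (τ z) n := by
  obtain ⟨p, hp, hn, hz, hc⟩ := h
  refine ⟨p.map τ, hp.map τ, by simp [hn], by simp [Polynomial.eval_map, hz],
    fun i => by simpa using hF _ (hc i)⟩

theorem HasMonic.mono {F F' : Subfield M} {z : M} {n : ℕ}
    (hF : F ≤ F') (h : HasMonic F z n) : HasMonic F' z n :=
  h.map (RingHom.id M) hF

theorem exists_finset_mem_closure {L G : Set M} {x : M} (hx : x ∈ Subfield.closure (L ∪ G)) :
    ∃ T : Finset M, ↑T ⊆ L ∧ x ∈ Subfield.closure (↑T ∪ G) := by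
  classical
  have mono : ∀ {T T' : Finset M}, T ⊆ T' → Subfield.closure (↑T ∪ G) ≤ Subfield.closure (↑T' ∪ G) :=
    fun h => Subfield.closure_mono (Set.union_subset_union_left _ (by exact_mod_cast h))
  induction hx using Subfield.closure_induction with
  | mem x hx =>
    rcases hx with hx | hx
    · exact ⟨{x}, by simpa using hx, Subfield.subset_closure (by simp)⟩
    · exact ⟨∅, by simp, Subfield.subset_closure (by simp [hx])⟩
  | one => exact ⟨∅, by simp, one_mem _⟩
  | add x y _ _ hx hy =>
    obtain ⟨T, hT, h⟩ := hx
    obtain ⟨T', hT', h'⟩ := hy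
    exact ⟨T ∪ T', by simp [hT, hT'], add_mem (mono Finset.subset_union_left h)
      (mono Finset.subset_union_right h')⟩
  | mul x y _ _ hx hy =>
    obtain ⟨T, hT, h⟩ := hx
    obtain ⟨T', hT', h'⟩ := hy
    exact ⟨T ∪ T', by simp [hT, hT'], mul_mem (mono Finset.subset_union_left h)
      (mono Finset.subset_union_right h')⟩
  | neg x _ hx =>
    obtain ⟨T, hT, h⟩ := hx
    exact ⟨T, hT, neg_mem h⟩
  | inv x _ hx =>
    obtain ⟨T, hT, h⟩ := hx
    exact ⟨T, hT, inv_mem h⟩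

theorem HasMonic.exists_finset {L G : Set M} {z : M} {n : ℕ}
    (h : HasMonic (Subfield.closure (L ∪ G)) z n) :
    ∃ T : Finset M, ↑T ⊆ L ∧ HasMonic (Subfield.closure (↑T ∪ G)) z n := by
  classical
  obtain ⟨p, hp, hn, hz, hc⟩ := h
  choose T hT hmem using fun i => exists_finset_mem_closure (hc i)
  refine ⟨(Finset.range (n + 1)).biUnion T, by simpa using fun i _ => hT i, p, hp, hn, hz, ?_⟩
  intro i
  by_cases hi : i < n + 1
  · refine Subfield.closure_mono (Set.union_subset_union_left _ ?_) (hmem i)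
    exact_mod_cast Finset.subset_biUnion_of_mem T (Finset.mem_range.2 hi)
  · rw [Polynomial.coeff_eq_zero_of_natDegree_lt (by omega)]
    exact zero_mem _

theorem hasMonic_of_ne_zero {F : Subfield M} {z : M} {p : Polynomial M} (hp : p ≠ 0)
    (hz : p.eval z = 0) (hc : ∀ i, p.coeff i ∈ F) : HasMonic F z p.natDegree := by
  have hl : p.leadingCoeff ≠ 0 := by simpa using hp
  refine ⟨Polynomial.C p.leadingCoeff⁻¹ * p, ?_, ?_, by simp [hz], fun i => ?_⟩
  · exact Polynomial.monic_C_mul_of_mul_leadingCoeff_eq_one (by simp [hl])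
  · exact Polynomial.natDegree_C_mul (by simpa using hp)
  · rw [Polynomial.coeff_C_mul]
    exact mul_mem (inv_mem (hc _)) (hc i)

theorem mem_of_mem_closure_insert {F F' : Subfield M} (hF : F' ≤ F) {z x : M}
    (hmin : (∀ n, ¬ HasMonic F z n) ∨ ∃ n, HasMonic F' z n ∧ ∀ m < n, ¬ HasMonic F z m)
    (hx : x ∈ F) (hxz : x ∈ Subfield.closure (↑F' ∪ {z})) : x ∈ F' := by
  have hadj : x ∈ IntermediateField.adjoin F' {z} := by
    have : Subfield.closure (↑F' ∪ {z}) ≤ (IntermediateField.adjoin F' {z}).toSubfield := by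
      rw [Subfield.closure_le]
      rintro y (hy | rfl)
      · exact (IntermediateField.adjoin F' {z}).algebraMap_mem ⟨y, hy⟩
      · exact IntermediateField.mem_adjoin_simple_self F' y
    exact this hxz
  obtain ⟨r, s, hrs⟩ := (IntermediateField.mem_adjoin_simple_iff F' x).1 hadj
  by_cases hs : Polynomial.aeval z s = 0
  · rw [hrs, hs, div_zero]; exact zero_mem _
  rw [eq_div_iff hs] at hrs
  have key : ∃ r s : Polynomial F', x * Polynomial.aeval z s = Polynomial.aeval z r ∧
      Polynomial.aeval z s ≠ 0 ∧
      ∀ w : Polynomial M, w ≠ 0 → w.eval z = 0 → (∀ i, w.coeff i ∈ F) →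
        w.degree ≤ max r.degree s.degree → False := by
    rcases hmin with h | ⟨n, h, h'⟩
    · exact ⟨r, s, hrs, hs, fun w hw hz hc _ => h _ (hasMonic_of_ne_zero hw hz hc)⟩
    · obtain ⟨p, hp, hn, hz, hc⟩ := h
      obtain ⟨q, hqp, hqd, hq⟩ := Polynomial.lifts_and_natDegree_eq_and_monic
        (p := p) (f := F'.subtype) ((Polynomial.lifts_iff_coeff_lifts p).2
          fun i => ⟨⟨_, hc i⟩, rfl⟩) hp
      have hq0 : Polynomial.aeval z q = 0 := by
        rw [← hz, ← hqp, Polynomial.eval_map]; rfl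
      have hmod : ∀ t : Polynomial F', Polynomial.aeval z (t %ₘ q) = Polynomial.aeval z t := by
        intro t
        conv_rhs => rw [← Polynomial.modByMonic_add_div t q]
        simp [hq0]
      refine ⟨r %ₘ q, s %ₘ q, by rw [hmod, hmod, hrs], by rwa [hmod],
        fun w hw hz hc hd => h' w.natDegree ?_ (hasMonic_of_ne_zero hw hz hc)⟩
      have hlt : w.degree < q.degree := lt_of_le_of_lt hd
        (max_lt (Polynomial.degree_modByMonic_lt _ hq) (Polynomial.degree_modByMonic_lt _ hq))
      rw [← hn, ← hqd]
      exact Polynomial.natDegree_lt_natDegree hw hlt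
  obtain ⟨r, s, hrs, hs, hw⟩ := key
  set w : Polynomial M := Polynomial.C x * s.map F'.subtype - r.map F'.subtype with hwdef
  have hws : ∀ t : Polynomial F', (t.map F'.subtype).eval z = Polynomial.aeval z t := fun t => by
    rw [Polynomial.eval_map]; rfl
  have hw0 : w = 0 := by
    by_contra hne
    refine hw w hne ?_ (fun i => ?_) ?_
    · simp [hwdef, hws, hrs]
    · simp only [hwdef, Polynomial.coeff_sub, Polynomial.coeff_C_mul, Polynomial.coeff_map]
      exact sub_mem (mul_mem hx (hF (s.coeff i).2)) (hF (r.coeff i).2)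
    · rw [max_comm]
      refine (Polynomial.degree_sub_le _ _).trans (max_le_max ?_ (Polynomial.degree_map_le))
      refine (Polynomial.degree_mul_le _ _).trans ?_
      calc _ ≤ 0 + s.degree := add_le_add Polynomial.degree_C_le Polynomial.degree_map_le
        _ = _ := zero_add _
  obtain ⟨i, hi⟩ : ∃ i, s.coeff i ≠ 0 := by
    by_contra! h
    exact hs (by rw [show s = 0 from Polynomial.ext h, map_zero])
  have hci := congrArg (Polynomial.coeff · i) hw0
  simp only [hwdef, Polynomial.coeff_sub, Polynomial.coeff_C_mul, Polynomial.coeff_map,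
    Polynomial.coeff_zero, Subfield.coe_subtype, sub_eq_zero] at hci
  have hi' : (s.coeff i : M) ≠ 0 := by simpa using hi
  rw [← eq_div_iff hi'] at hci
  rw [hci]
  exact div_mem (r.coeff i).2 (s.coeff i).2

theorem exists_bound_eventually_periodic (μ : ℕ → ℕ∞) {P : ℕ} (hP : 1 ≤ P)
    (hμ : ∀ j, μ (j + P) ≤ μ j) : ∃ N, ∀ j, N ≤ j → μ (j + P) = μ j := by
  have hanti : ∀ r i i', i ≤ i' → μ (r + i' * P) ≤ μ (r + i * P) := by
    intro r i i' h
    induction i', h using Nat.le_induction with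
    | base => exact le_rfl
    | succ i' _ ih =>
      refine le_trans ?_ ih
      have := hμ (r + i' * P)
      rwa [show r + i' * P + P = r + (i' + 1) * P by ring] at this
  have hmin : ∀ r, ∃ i, ∀ i', μ (r + i * P) ≤ μ (r + i' * P) := by
    intro r
    obtain ⟨_, ⟨i, rfl⟩, hi⟩ := WellFounded.has_min (wellFounded_lt (α := ℕ∞))
      (Set.range fun i => μ (r + i * P)) (Set.range_nonempty _)
    exact ⟨i, fun i' => not_lt.1 (hi _ ⟨i', rfl⟩)⟩
  choose i hi using hmin
  refine ⟨((Finset.range P).sup fun r => i r + 1) * P, fun j hj => le_antisymm (hμ j) ?_⟩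
  have hr : j % P < P := Nat.mod_lt _ (by omega)
  have hir : i (j % P) ≤ j / P := by
    have h1 : i (j % P) + 1 ≤ (Finset.range P).sup fun r => i r + 1 :=
      Finset.le_sup (f := fun r => i r + 1) (Finset.mem_range.2 hr)
    have h2 : ((Finset.range P).sup fun r => i r + 1) ≤ j / P :=
      (Nat.le_div_iff_mul_le (by omega)).2 hj
    omega
  have hj' : j = j % P + j / P * P := by rw [mul_comm]; exact (Nat.mod_add_div j P).symm
  calc μ j = μ (j % P + j / P * P) := by rw [← hj']
    _ ≤ μ (j % P + i (j % P) * P) := hanti _ _ _ hir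
    _ ≤ μ (j % P + (j / P + 1) * P) := hi _ _
    _ = μ (j + P) := by congr 1; conv_rhs => rw [hj']
                        ring

theorem exists_finset_generators (τ : M →+* M) (K L : Set M) (hK : ∀ x ∈ K, τ x ∈ K)
    (hL : ∀ x ∈ L, τ x ∈ L) (z : ℕ → M) {P : ℕ} (hP : 1 ≤ P) (hz : ∀ j, τ (z j) = z (j + P))
    (hgen : L ⊆ Subfield.closure (K ∪ Set.range z)) :
    ∃ T : Finset M, ↑T ⊆ L ∧
      L ⊆ Subfield.closure ({x | ∃ t ∈ T, ∃ n : ℕ, τ^[n] t = x} ∪ K) := by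
  classical
  let G : ℕ → Set M := fun j => K ∪ {x | ∃ i < j, z i = x}
  let F : ℕ → Subfield M := fun j => Subfield.closure (L ∪ G j)
  let μ : ℕ → ℕ∞ := fun j => sInf {n | ∃ m : ℕ, HasMonic (F j) (z j) m ∧ (m : ℕ∞) = n}
  have hτG : ∀ j, ∀ x ∈ G j, τ x ∈ G (j + P) := by
    rintro j x (hx | ⟨i, hi, rfl⟩)
    · exact Or.inl (hK x hx)
    · exact Or.inr ⟨i + P, by omega, (hz i).symm⟩
  have hτcl : ∀ {S S' : Set M}, (∀ x ∈ S, τ x ∈ S') → ∀ x ∈ Subfield.closure S,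
      τ x ∈ Subfield.closure S' := by
    intro S S' h x hx
    have : Subfield.closure S ≤ (Subfield.closure S').comap τ :=
      Subfield.closure_le.2 fun x hx => Subfield.subset_closure (h x hx)
    exact this hx
  have hμ : ∀ j, μ (j + P) ≤ μ j := by
    intro j
    refine le_sInf ?_
    rintro _ ⟨m, hm, rfl⟩
    refine sInf_le ⟨m, ?_, rfl⟩
    rw [← hz]
    refine hm.map τ (hτcl ?_)
    rintro x (hx | hx)
    · exact Or.inl (hL x hx)
    · exact Or.inr (hτG j x hx)
  obtain ⟨N, hN⟩ := exists_bound_eventually_periodic μ hP hμ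
  let orb : Finset M → Set M := fun T => {x | ∃ t ∈ T, ∃ n : ℕ, τ^[n] t = x}
  have horb : ∀ T, ∀ x ∈ orb T, τ x ∈ orb T := by
    rintro T _ ⟨t, ht, n, rfl⟩
    exact ⟨t, ht, n + 1, Function.iterate_succ_apply' _ _ _⟩
  let Good : Finset M → ℕ → Prop := fun T j =>
    ∀ n : ℕ, n = μ j → HasMonic (Subfield.closure (orb T ∪ G j)) (z j) n
  have hex : ∀ j, ∃ T : Finset M, ↑T ⊆ L ∧ Good T j := by
    intro j
    by_cases hj : ∃ n : ℕ, n = μ j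
    · obtain ⟨n, hn⟩ := hj
      have hmem : μ j ∈ {n | ∃ m : ℕ, HasMonic (F j) (z j) m ∧ (m : ℕ∞) = n} := by
        apply csInf_mem
        by_contra hemp
        rw [Set.not_nonempty_iff_eq_empty] at hemp
        have : μ j = ⊤ := by simp only [μ, hemp, sInf_empty]
        rw [this] at hn
        exact ENat.natCast_ne_top _ hn
      obtain ⟨m, hm, hmn⟩ := hmem
      obtain ⟨T, hT, h⟩ := hm.exists_finset
      refine ⟨T, hT, fun n' hn' => ?_⟩
      rw [← hmn, Nat.cast_inj] at hn'
      subst hn'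
      refine h.mono (Subfield.closure_mono (Set.union_subset_union_left _ ?_))
      exact fun t ht => ⟨t, ht, 0, rfl⟩
    · exact ⟨∅, by simp, fun n hn => (hj ⟨n, hn⟩).elim⟩
  choose T' hT' hgood using hex
  let T := (Finset.range (N + P)).biUnion T'
  have hTL : ↑T ⊆ L := by simpa [T] using fun i _ => hT' i
  have horbL : orb T ⊆ L := by
    rintro _ ⟨t, ht, n, rfl⟩
    induction n with
    | zero => exact hTL ht
    | succ n ih => rw [Function.iterate_succ_apply']; exact hL _ ih
  have hall : ∀ j, Good T j := by
    intro j
    induction j using Nat.strong_induction_on with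
    | _ j ih =>
    by_cases hj : j < N + P
    · intro n hn
      refine (hgood j n hn).mono (Subfield.closure_mono (Set.union_subset_union_left _ ?_))
      rintro _ ⟨t, ht, n, rfl⟩
      exact ⟨t, Finset.mem_biUnion.2 ⟨j, Finset.mem_range.2 hj, ht⟩, n, rfl⟩
    · obtain ⟨i, rfl⟩ : ∃ i, j = i + P := ⟨j - P, by omega⟩
      intro n hn
      rw [hN i (by omega)] at hn
      rw [← hz]
      refine (ih i (by omega) n hn).map τ (hτcl ?_)
      rintro x (hx | hx)
      · exact Or.inl (horb T x hx)
      · exact Or.inr (hτG i x hx)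
  refine ⟨T, hTL, fun x hx => ?_⟩
  have hdesc : ∀ j, x ∈ Subfield.closure (orb T ∪ G j) → x ∈ Subfield.closure (orb T ∪ G 0) := by
    intro j
    induction j with
    | zero => exact id
    | succ j ih =>
      intro hxj
      apply ih
      refine mem_of_mem_closure_insert (F := F j) (z := z j)
        (Subfield.closure_mono (Set.union_subset_union_left _ horbL)) ?_
        (Subfield.subset_closure (Or.inl hx)) ?_
      · rcases eq_or_ne (μ j) ⊤ with h | h
        · refine Or.inl fun n hn => ?_
          have : μ j ≤ n := sInf_le ⟨n, hn, rfl⟩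
          rw [h] at this
          exact ENat.natCast_ne_top n (top_le_iff.1 this)
        · obtain ⟨n, hn⟩ := ENat.ne_top_iff_exists.1 h
          refine Or.inr ⟨n, hall j n hn, fun m hm hmm => ?_⟩
          have : μ j ≤ m := sInf_le ⟨m, hmm, rfl⟩
          rw [← hn, Nat.cast_le] at this
          omega
      · refine (Subfield.closure_le.2 ?_ :
          _ ≤ Subfield.closure (↑(Subfield.closure (orb T ∪ G j)) ∪ {z j})) hxj
        rintro y (hy | hy | ⟨i, hi, rfl⟩)
        · exact Subfield.subset_closure (Or.inl (Subfield.subset_closure (Or.inl hy)))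
        · exact Subfield.subset_closure (Or.inl (Subfield.subset_closure (Or.inr (Or.inl hy))))
        · rcases Nat.lt_succ_iff_lt_or_eq.1 hi with hi | rfl
          · exact Subfield.subset_closure
              (Or.inl (Subfield.subset_closure (Or.inr (Or.inr ⟨i, hi, rfl⟩))))
          · exact Subfield.subset_closure (Or.inr rfl)
  obtain ⟨S, hS, hxS⟩ := exists_finset_mem_closure
    (L := Set.range z) (G := K) (by rw [Set.union_comm]; exact hgen hx)
  obtain ⟨j, hj⟩ : ∃ j, (S : Set M) ⊆ {x | ∃ i < j, z i = x} := by
    choose! g hg using fun y (hy : y ∈ S) => hS hy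
    exact ⟨S.sup g + 1, fun y hy => ⟨g y, Nat.lt_succ_of_le (Finset.le_sup hy), hg y hy⟩⟩
  have := hdesc j (Subfield.closure_mono (by
    rintro y (hy | hy)
    · exact Or.inr (Or.inr (hj hy))
    · exact Or.inr (Or.inl hy)) hxS)
  simpa [G, orb] using this

end

section

open scoped TensorProduct

variable {k K M : Type*} [Field k] [Field K] [Field M] [Algebra k K] [Algebra k M]

theorem mem_of_mem_closure_union (i : K →ₐ[k] M) {L E : IntermediateField k M} (hE : E ≤ L)
    (hinj : Function.Injective (Algebra.TensorProduct.productMap i L.val)) {x : M} (hx : x ∈ L)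
    (hxE : x ∈ Subfield.closure (↑E ∪ Set.range i)) : x ∈ E := by
  classical
  obtain ⟨y, hy, u, hu, rfl⟩ := Subfield.mem_closure_iff.1 hxE
  let f := Algebra.TensorProduct.productMap i E.val
  have hf : Subring.closure (↑E ∪ Set.range i) ≤ f.range.toSubring := by
    rw [Subring.closure_le]
    rintro _ (hv | ⟨a, rfl⟩)
    · exact ⟨1 ⊗ₜ ⟨_, hv⟩, by simp [f]⟩
    · exact ⟨a ⊗ₜ 1, by simp [f]⟩
  obtain ⟨y, rfl⟩ := hf hy
  obtain ⟨u, rfl⟩ := hf hu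
  set x := f.toRingHom y / f.toRingHom u with hxdef
  by_cases hu0 : f u = 0
  · have : x = 0 := by rw [hxdef]; exact (div_eq_zero_iff).2 (Or.inr hu0)
    rw [this]; exact zero_mem _
  have hmul : x * f u = f y := div_mul_cancel₀ _ hu0
  let b := Module.Basis.ofVectorSpace k K
  let eE := TensorProduct.equivFinsuppOfBasisLeft (N := E) b
  let eL := TensorProduct.equivFinsuppOfBasisLeft (N := L) b
  let ι : K ⊗[k] E →ₐ[k] K ⊗[k] L :=
    Algebra.TensorProduct.map (AlgHom.id k K) (IntermediateField.inclusion hE)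
  have hι : ∀ v, Algebra.TensorProduct.productMap i L.val (ι v) = f v := by
    intro v
    induction v with
    | zero => simp
    | tmul a m => simp [ι, f]
    | add a b ha hb => simp only [map_add, ha, hb]
  have hιe : ∀ v l, ((eL (ι v) l : L) : M) = (eE v l : M) := by
    intro v l
    induction v with
    | zero => simp
    | tmul a m =>
      simp [ι, eL, eE]
    | add a b ha hb => simp [ha, hb]
  have hsc : ∀ v l, eL ((1 ⊗ₜ (⟨x, hx⟩ : L)) * v) l = (⟨x, hx⟩ : L) * eL v l := by
    intro v l
    induction v with
    | zero => simp
    | tmul a m =>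
      simp [eL]
    | add a b ha hb => simp [ha, hb, mul_add]
  have heq : (1 ⊗ₜ (⟨x, hx⟩ : L)) * ι u = ι y := by
    apply hinj
    rw [map_mul, hι, hι, ← hmul]
    simp
  have hne : eE u ≠ 0 := fun h => hu0 (by rw [(LinearEquiv.map_eq_zero_iff eE).1 h, map_zero])
  obtain ⟨l, hl⟩ := Finsupp.ne_iff.1 hne
  have h1 := congrArg (Subtype.val) (hsc (ι u) l)
  rw [heq] at h1
  simp only [MulMemClass.coe_mul, hιe] at h1
  have hl' : (eE u l : M) ≠ 0 := by simpa using hl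
  rw [← div_eq_iff hl'] at h1
  rw [← h1]
  exact div_mem (eE y l).2 (eE u l).2

end

section

open Set

variable {α : Type*}

theorem Matroid.exists_indep_image_subset_closure {m : Matroid α} [m.Finitary]
    (hE : m.E = univ) (τ : α → α)
    (hτ : ∀ (S : Set α) x, x ∈ m.closure S → τ x ∈ m.closure (τ '' S))
    (z : ℕ → α) {P : ℕ} (hP : 1 ≤ P) (hz : ∀ j, τ (z j) = z (j + P)) :
    ∃ (B : Set α) (N : ℕ), m.Indep B ∧ m.Indep (τ '' B) ∧ τ '' B ⊆ m.closure B ∧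
      (τ '' B \ B).Finite ∧ ∀ j, N ≤ j → z j ∈ m.closure B := by
  classical
  have hg : ∀ S : Set α, S ⊆ m.E := fun S => hE ▸ subset_univ S
  let a : ℕ → Prop := fun j => z j ∉ m.closure (z '' Iio j)
  have ha : ∀ j, a (j + P) → a j := by
    intro j h hj
    apply h
    rw [← hz]
    refine m.closure_subset_closure ?_ (hτ _ _ hj)
    rintro _ ⟨_, ⟨i, hi, rfl⟩, rfl⟩
    rw [mem_Iio] at hi
    exact ⟨i + P, by simpa using hi, (hz i).symm⟩
  obtain ⟨N₀, hN₀⟩ := exists_bound_eventually_periodic (fun j => if a j then 1 else 0) hP (by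
    intro j
    by_cases h : a (j + P)
    · simp [h, ha j h]
    · simp [h])
  have haP : ∀ j, N₀ ≤ j → a j → a (j + P) := by
    intro j hj h
    simpa [h] using hN₀ j hj
  have hfin : ∀ n, m.Indep (z '' {j | j < n ∧ a j}) := by
    intro n
    induction n with
    | zero => simp
    | succ n ih =>
      by_cases h : a n
      · have heq : z '' {j | j < n + 1 ∧ a j} = insert (z n) (z '' {j | j < n ∧ a j}) := by
          rw [← image_insert_eq]
          congr 1
          ext j
          simp only [mem_ofPred_eq, mem_insert_iff]
          constructor
          · rintro ⟨h1, h2⟩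
            rcases Nat.lt_succ_iff_lt_or_eq.1 h1 with h1 | h1
            · exact Or.inr ⟨h1, h2⟩
            · exact Or.inl h1
          · rintro (rfl | ⟨h1, h2⟩)
            · exact ⟨by omega, h⟩
            · exact ⟨by omega, h2⟩
        rw [heq, Matroid.insert_indep_iff]
        refine ⟨ih, fun _ => ⟨hE ▸ mem_univ _, fun hc => h (m.closure_subset_closure ?_ hc)⟩⟩
        exact image_mono fun j hj => hj.1
      · have heq : {j | j < n + 1 ∧ a j} = {j | j < n ∧ a j} := by
          ext j
          simp only [mem_ofPred_eq]
          constructor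
          · rintro ⟨h1, h2⟩
            rcases Nat.lt_succ_iff_lt_or_eq.1 h1 with h1 | rfl
            · exact ⟨h1, h2⟩
            · exact (h h2).elim
          · rintro ⟨h1, h2⟩
            exact ⟨by omega, h2⟩
        rw [heq]; exact ih
  have hI : m.Indep (z '' {j | a j}) := by
    rw [Matroid.indep_iff_forall_finite_subset_indep]
    intro J hJ hJf
    obtain ⟨S, hS, hSf, rfl⟩ :=
      (exists_subset_image_finite_and (p := (· = J))).1 ⟨J, hJ, hJf, rfl⟩
    obtain ⟨n, hn⟩ := hSf.bddAbove
    exact (hfin (n + 1)).subset (image_mono fun j hj => ⟨Nat.lt_succ_of_le (hn hj), hS hj⟩)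
  have hspan : ∀ j, z j ∈ m.closure (z '' {j | a j}) := by
    intro j
    induction j using Nat.strong_induction_on with
    | _ j ih =>
    by_cases h : a j
    · exact m.mem_closure_of_mem ⟨j, h, rfl⟩ (hg _)
    · refine m.closure_subset_closure_of_subset_closure ?_ (not_not.1 h)
      rintro _ ⟨i, hi, rfl⟩
      exact ih i hi
  let U : Set α := z '' {j | N₀ ≤ j ∧ a j}
  have hU : m.Indep U := hI.subset (image_mono fun j hj => hj.2)
  have hτU : τ '' U ⊆ U := by
    rintro _ ⟨_, ⟨j, ⟨hj, haj⟩, rfl⟩, rfl⟩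
    exact ⟨j + P, ⟨by omega, haP j hj haj⟩, (hz j).symm⟩
  let W : ℕ → Finset α → Prop := fun N t =>
    (∀ x ∈ t, ∃ j, N ≤ j ∧ z j = x) ∧ ∀ j, N ≤ j → z j ∈ m.closure (U ∪ ↑t)
  have hex : ∃ n N t, W N t ∧ t.card = n := by
    refine ⟨_, 0, ((Finset.range N₀).filter a).image z, ⟨?_, fun j _ => ?_⟩, rfl⟩
    · intro x hx
      obtain ⟨j, _, rfl⟩ := Finset.mem_image.1 hx
      exact ⟨j, Nat.zero_le _, rfl⟩
    · refine m.closure_subset_closure ?_ (hspan j)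
      rintro _ ⟨i, hi, rfl⟩
      rcases lt_or_ge i N₀ with h | h
      · exact Or.inr (by simpa using ⟨i, ⟨h, hi⟩, rfl⟩)
      · exact Or.inl ⟨i, ⟨h, hi⟩, rfl⟩
  have hmin : ∀ N t, W N t → t.card ≤ Nat.find hex → m.Indep (U ∪ ↑t) := by
    intro N t hW ht
    obtain ⟨B, hB, hUB⟩ := hU.subset_isBasis_of_subset (X := U ∪ ↑t) subset_union_left (hg _)
    let t' := t.filter (· ∈ B)
    have hBt : B = U ∪ ↑t' := by
      ext x
      simp only [t', mem_union, Finset.coe_filter, mem_ofPred_eq]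
      constructor
      · intro hx
        rcases hB.subset hx with h | h
        · exact Or.inl h
        · exact Or.inr ⟨h, hx⟩
      · rintro (h | h)
        · exact hUB h
        · exact h.2
    have hle : Nat.find hex ≤ t'.card := Nat.find_min' hex ⟨N, t', ⟨fun x hx =>
      hW.1 x (Finset.mem_filter.1 hx).1, fun j hj => by
        rw [← hBt, hB.closure_eq_closure]; exact hW.2 j hj⟩, rfl⟩
    have : t' = t := Finset.eq_of_subset_of_card_le (Finset.filter_subset _ _) (ht.trans hle)
    rw [← this, ← hBt]
    exact hB.indep
  obtain ⟨N, t, hW, ht⟩ := Nat.find_spec hex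
  have hτt : W (N + P) (t.image τ) := by
    refine ⟨fun x hx => ?_, fun j hj => ?_⟩
    · obtain ⟨y, hy, rfl⟩ := Finset.mem_image.1 hx
      obtain ⟨j, hj, rfl⟩ := hW.1 y hy
      exact ⟨j + P, by omega, (hz j).symm⟩
    · obtain ⟨i, rfl⟩ : ∃ i, j = i + P := ⟨j - P, by omega⟩
      rw [← hz]
      refine m.closure_subset_closure ?_ (hτ _ _ (hW.2 i (by omega)))
      rw [image_union, Finset.coe_image]
      exact union_subset_union_left _ hτU
  refine ⟨U ∪ ↑t, N, hmin N t hW ht.le, ?_, ?_, ?_, hW.2⟩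
  · refine (hmin _ _ hτt (Finset.card_image_le.trans ht.le)).subset ?_
    rw [image_union, Finset.coe_image]
    exact union_subset_union_left _ hτU
  · rintro _ ⟨x, hx | hx, rfl⟩
    · exact m.mem_closure_of_mem (Or.inl (hτU ⟨x, hx, rfl⟩)) (hg _)
    · obtain ⟨j, hj, rfl⟩ := hW.1 x hx
      rw [hz]
      exact hW.2 _ (by omega)
  · refine (t.image τ).finite_toSet.subset ?_
    rintro _ ⟨⟨x, hx | hx, rfl⟩, hn⟩
    · exact (hn (Or.inl (hτU ⟨x, hx, rfl⟩))).elim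
    · exact Finset.mem_coe.2 (Finset.mem_image_of_mem τ hx)

end

section

open Set

/-- A place of `M`: a subring with a ring homomorphism to a field, such that the inverse of every
element outside the subring lies in the kernel. -/
structure Place (M : Type u) (κ : Type v) [Field M] [Field κ] where
  ring : Subring M
  res : ring →+* κ
  inv_mem : ∀ x, x ∉ ring → ∃ h : x⁻¹ ∈ ring, res ⟨x⁻¹, h⟩ = 0

namespace Place

variable {M : Type u} {κ : Type v} [Field M] [Field κ] (𝔭 : Place M κ)

open Classical in
/-- The residue of an element of the ring of a place, and zero elsewhere. -/
noncomputable def val (x : M) : κ := if h : x ∈ 𝔭.ring then 𝔭.res ⟨x, h⟩ else 0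

theorem val_of_mem {x : M} (h : x ∈ 𝔭.ring) : 𝔭.val x = 𝔭.res ⟨x, h⟩ := dif_pos h

@[simp] theorem val_coe (x : 𝔭.ring) : 𝔭.val x = 𝔭.res x := 𝔭.val_of_mem x.2

theorem val_of_notMem {x : M} (h : x ∉ 𝔭.ring) : 𝔭.val x = 0 := dif_neg h

theorem val_add {x y : M} (hx : x ∈ 𝔭.ring) (hy : y ∈ 𝔭.ring) :
    𝔭.val (x + y) = 𝔭.val x + 𝔭.val y := by
  rw [val_of_mem _ hx, val_of_mem _ hy, val_of_mem _ (add_mem hx hy), ← map_add]; rfl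

theorem val_mul {x y : M} (hx : x ∈ 𝔭.ring) (hy : y ∈ 𝔭.ring) :
    𝔭.val (x * y) = 𝔭.val x * 𝔭.val y := by
  rw [val_of_mem _ hx, val_of_mem _ hy, val_of_mem _ (mul_mem hx hy), ← map_mul]; rfl

/-- The pullback of a place along an endomorphism. -/
def comap (τ : M →+* M) : Place M κ where
  ring := 𝔭.ring.comap τ
  res := 𝔭.res.comp (τ.restrict (𝔭.ring.comap τ) 𝔭.ring fun _ h => h)
  inv_mem x hx := by
    obtain ⟨h, h'⟩ := 𝔭.inv_mem (τ x) hx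
    refine ⟨by simpa using h, ?_⟩
    rw [← h']
    exact congrArg 𝔭.res (Subtype.ext (map_inv₀ τ x))

theorem mem_comap {τ : M →+* M} {x : M} : x ∈ (𝔭.comap τ).ring ↔ τ x ∈ 𝔭.ring := Iff.rfl

theorem val_comap (τ : M →+* M) (x : M) : (𝔭.comap τ).val x = 𝔭.val (τ x) := by
  by_cases h : τ x ∈ 𝔭.ring
  · rw [val_of_mem _ h, val_of_mem _ (𝔭.mem_comap.2 h)]; rfl
  · exact (val_of_notMem _ (mt 𝔭.mem_comap.1 h)).trans (𝔭.val_of_notMem h).symm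

theorem mem_of_root {p : Polynomial M} {y : M} (hp : ∀ i, p.coeff i ∈ 𝔭.ring)
    (hy : p.eval y = 0) (hl : 𝔭.val p.leadingCoeff ≠ 0) : y ∈ 𝔭.ring := by
  by_contra hmem
  obtain ⟨h, h0⟩ := 𝔭.inv_mem y hmem
  obtain ⟨q, rfl⟩ := (Polynomial.mem_lifts p).1 ((Polynomial.lifts_iff_coeff_lifts
    (f := 𝔭.ring.subtype) p).2 fun i => ⟨⟨_, hp i⟩, rfl⟩)
  have hlead : (q.map 𝔭.ring.subtype).leadingCoeff = q.leadingCoeff :=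
    Polynomial.leadingCoeff_map_of_injective Subtype.val_injective q
  rw [hlead, val_coe] at hl
  have hy0 : y ≠ 0 := fun h => hmem (h ▸ zero_mem _)
  let _ := invertibleOfNonzero hy0
  rw [Polynomial.eval_map, ← Polynomial.eval₂_reverse_eq_zero_iff, invOf_eq_inv] at hy
  have h1 : q.reverse.eval (⟨y⁻¹, h⟩ : 𝔭.ring) = 0 := by
    apply Subtype.val_injective
    rw [ZeroMemClass.coe_zero, ← hy]
    exact (Polynomial.eval₂_at_apply 𝔭.ring.subtype (⟨y⁻¹, h⟩ : 𝔭.ring)).symm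
  have h2 := congrArg 𝔭.res h1
  rw [← Polynomial.eval₂_at_apply, h0, ← Polynomial.eval_map, ← Polynomial.coeff_zero_eq_eval_zero,
    Polynomial.coeff_map, Polynomial.coeff_zero_reverse, map_zero] at h2
  exact hl h2

variable (B : Type w) [CommRing B] [Algebra B M]

/-- The residues of the elements of `B`. -/
def resBase : Subring κ := ((algebraMap B M).range.comap 𝔭.ring.subtype).map 𝔭.res

/-- The set `T` lies in the ring of the place, and its residues are algebraically independent
over the residues of `B`. -/
def Gauss (T : Set M) : Prop :=
  T ⊆ 𝔭.ring ∧ AlgebraicIndepOn (𝔭.resBase B) 𝔭.val T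

variable {B}

theorem mem_resBase {c : κ} : c ∈ 𝔭.resBase B ↔
    ∃ b : B, ∃ h : algebraMap B M b ∈ 𝔭.ring, 𝔭.res ⟨_, h⟩ = c := by
  constructor
  · rintro ⟨⟨_, h⟩, ⟨b, rfl⟩, rfl⟩
    exact ⟨b, h, rfl⟩
  · rintro ⟨b, h, rfl⟩
    exact ⟨⟨_, h⟩, ⟨b, rfl⟩, rfl⟩

theorem Gauss.mono {𝔭 : Place M κ} {S T : Set M} (h : 𝔭.Gauss B T) (hST : S ⊆ T) :
    𝔭.Gauss B S :=
  ⟨hST.trans h.1, h.2.mono hST⟩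

theorem Gauss.comap {𝔭 : Place M κ} {T : Set M} {τ : M →+* M}
    (hτ : ∀ b : B, ∃ c : B, algebraMap B M c = τ (algebraMap B M b))
    (h : 𝔭.Gauss B (τ '' T)) : (𝔭.comap τ).Gauss B T := by
  refine ⟨fun x hx => h.1 ⟨x, hx, rfl⟩, ?_⟩
  have hle : (𝔭.comap τ).resBase B ≤ 𝔭.resBase B := by
    intro c hc
    obtain ⟨b, hb, rfl⟩ := (mem_resBase _).1 hc
    obtain ⟨d, hd⟩ := hτ b
    refine (mem_resBase _).2 ⟨d, hd ▸ hb, ?_⟩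
    exact congrArg 𝔭.res (Subtype.ext hd)
  let : Algebra ((𝔭.comap τ).resBase B) (𝔭.resBase B) := (Subring.inclusion hle).toAlgebra
  have : IsScalarTower ((𝔭.comap τ).resBase B) (𝔭.resBase B) κ :=
    IsScalarTower.of_algebraMap_eq fun _ => rfl
  have h1 := AlgebraicIndependent.restrictScalars (R := (𝔭.comap τ).resBase B)
    (Subring.inclusion_injective hle) h.2
  have h2 := h1.comp (fun x : T => (⟨τ x, x, x.2, rfl⟩ : τ '' T))
    (fun x y hxy => Subtype.ext (τ.injective (congrArg Subtype.val hxy)))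
  have heq : (fun x : T => (𝔭.comap τ).val x) =
      (fun x : (τ '' T : Set M) => 𝔭.val x) ∘ (fun x : T => (⟨τ x, x, x.2, rfl⟩ : (τ '' T : Set M))) :=
    funext fun x => 𝔭.val_comap τ x
  rw [AlgebraicIndepOn, heq]
  exact h2

section

variable (hB : ∀ b : B, algebraMap B M b ∈ 𝔭.ring)

/-- The residue map from `B` onto its residues. -/
def toBase : B →+* 𝔭.resBase B :=
  (𝔭.res.comp ((algebraMap B M).codRestrict 𝔭.ring hB)).codRestrict _ fun b =>
    𝔭.mem_resBase.2 ⟨b, hB b, rfl⟩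

theorem toBase_surjective : Function.Surjective (𝔭.toBase hB) := by
  rintro ⟨c, hc⟩
  obtain ⟨b, h, rfl⟩ := 𝔭.mem_resBase.1 hc
  exact ⟨b, rfl⟩

theorem coe_toBase (b : B) : (𝔭.toBase hB b : κ) = 𝔭.val (algebraMap B M b) :=
  (𝔭.val_of_mem (hB b)).symm

theorem val_aeval {T : Set M} (hT : T ⊆ 𝔭.ring) (P : MvPolynomial T B) :
    MvPolynomial.aeval (fun x : T => (x : M)) P ∈ 𝔭.ring ∧
      𝔭.val (MvPolynomial.aeval (fun x : T => (x : M)) P) =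
        MvPolynomial.aeval (fun x : T => 𝔭.val x) (P.map (𝔭.toBase hB)) := by
  induction P using MvPolynomial.induction_on with
  | C b =>
    rw [MvPolynomial.algHom_C, MvPolynomial.map_C, MvPolynomial.algHom_C]
    exact ⟨hB b, (𝔭.coe_toBase hB b).symm⟩
  | add p q hp hq =>
    rw [map_add, map_add, map_add, 𝔭.val_add hp.1 hq.1, hp.2, hq.2]
    exact ⟨add_mem hp.1 hq.1, rfl⟩
  | mul_X p x hp =>
    rw [map_mul, map_mul, map_mul, MvPolynomial.aeval_X, MvPolynomial.map_X, MvPolynomial.aeval_X,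
      𝔭.val_mul hp.1 (hT x.2), hp.2]
    exact ⟨mul_mem hp.1 (hT x.2), rfl⟩

end

theorem adjoin_subset_ring (hB : ∀ b : B, algebraMap B M b ∈ 𝔭.ring)
    {T : Set M} (hT : T ⊆ 𝔭.ring) {x : M} (hx : x ∈ Algebra.adjoin B T) :
    x ∈ 𝔭.ring := by
  induction hx using Algebra.adjoin_induction with
  | mem x hx => exact hT hx
  | algebraMap b => exact hB b
  | add x y _ _ hx hy => exact add_mem hx hy
  | mul x y _ _ hx hy => exact mul_mem hx hy

theorem val_mem_adjoin (hB : ∀ b : B, algebraMap B M b ∈ 𝔭.ring)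
    {T : Set M} (hT : T ⊆ 𝔭.ring) {x : M} (hx : x ∈ Algebra.adjoin B T) :
    𝔭.val x ∈ Algebra.adjoin (𝔭.resBase B) (𝔭.val '' T) := by
  have mem : ∀ x ∈ Algebra.adjoin B T, x ∈ 𝔭.ring := fun x => 𝔭.adjoin_subset_ring hB hT
  induction hx using Algebra.adjoin_induction with
  | mem x hx => exact Algebra.subset_adjoin ⟨x, hx, rfl⟩
  | algebraMap b => rw [← 𝔭.coe_toBase hB]; exact Subalgebra.algebraMap_mem _ (𝔭.toBase hB b)
  | add x y hx' hy' hx hy => rw [𝔭.val_add (mem x hx') (mem y hy')]; exact add_mem hx hy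
  | mul x y hx' hy' hx hy => rw [𝔭.val_mul (mem x hx') (mem y hy')]; exact mul_mem hx hy

theorem exists_val_ne_zero {T : Set M} {l : M} (hl : l ∈ Algebra.adjoin B T) (hl0 : l ≠ 0) :
    ∃ f : B, f ≠ 0 ∧ ∀ (κ : Type v) [Field κ] (𝔭 : Place M κ), (∀ b : B, algebraMap B M b ∈ 𝔭.ring) →
      𝔭.val (algebraMap B M f) ≠ 0 → 𝔭.Gauss B T → 𝔭.val l ≠ 0 := by
  rw [Algebra.adjoin_eq_range] at hl
  obtain ⟨P, rfl⟩ := hl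
  obtain ⟨i, hi⟩ := MvPolynomial.ne_zero_iff.1 (show P ≠ 0 by rintro rfl; exact hl0 (map_zero _))
  refine ⟨_, hi, fun κ _ 𝔭 hB hf hG h0 => hf ?_⟩
  have h1 := (𝔭.val_aeval hB hG.1 P).2
  have h0' : 𝔭.val (MvPolynomial.aeval (fun x : T => (x : M)) P) = 0 := h0
  rw [h0'] at h1
  have h2 : P.map (𝔭.toBase hB) = 0 := hG.2 (by rw [← h1, map_zero])
  rw [← 𝔭.coe_toBase hB, ← MvPolynomial.coeff_map, h2]
  simp

theorem exists_mem_ring {T : Set M} {y : M} (hy : IsAlgebraic (Algebra.adjoin B T) y) :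
    ∃ f : B, f ≠ 0 ∧ ∀ (κ : Type v) [Field κ] (𝔭 : Place M κ), (∀ b : B, algebraMap B M b ∈ 𝔭.ring) →
      𝔭.val (algebraMap B M f) ≠ 0 → 𝔭.Gauss B T → y ∈ 𝔭.ring := by
  obtain ⟨p, hp, hpy⟩ := hy
  obtain ⟨f, hf, h⟩ := exists_val_ne_zero (p.leadingCoeff).2 (by simpa using hp)
  refine ⟨f, hf, fun κ _ 𝔭 hB hf hG => ?_⟩
  refine 𝔭.mem_of_root (p := p.map (algebraMap _ M)) (fun i => ?_) ?_ ?_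
  · rw [Polynomial.coeff_map]
    exact 𝔭.adjoin_subset_ring hB hG.1 (p.coeff i).2
  · rw [Polynomial.eval_map]; exact hpy
  · rw [Polynomial.leadingCoeff_map_of_injective Subtype.val_injective]
    exact h κ 𝔭 hB hf hG

end Place
end

section

open Polynomial

attribute [local instance] Polynomial.algebra Polynomial.isLocalization in
theorem Polynomial.exists_C_mul_eq_C_mul {D : Type*} [CommRing D] [IsDomain D] {P : D[X][X]}
    (hP : P ≠ 0) : ∃ (c r : D) (G : D[X]) (Q : D[X][X]) (s : Finset ℕ) (u : ℕ → D[X]),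
      r ≠ 0 ∧ G ≠ 0 ∧ C (C c) * P = C G * Q ∧ ∑ i ∈ s, u i * Q.coeff i = C r := by
  classical
  let E := FractionRing D
  let S := (nonZeroDivisors D).map (C : D →+* D[X])
  have hinj : Function.Injective (algebraMap D[X] E[X]) :=
    Polynomial.map_injective _ (IsFractionRing.injective D E)
  have hinj2 : Function.Injective (mapRingHom (algebraMap D[X] E[X])) :=
    Polynomial.map_injective _ hinj
  let PE : E[X][X] := P.map (algebraMap D[X] E[X])
  have hPE : PE ≠ 0 := (Polynomial.map_ne_zero_iff hinj).2 hP
  obtain ⟨g, hg⟩ := IsPrincipalIdealRing.principal (Ideal.span (Set.range PE.coeff))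
  have hdvd : C g ∣ PE := by
    rw [C_dvd_iff_dvd_coeff]
    intro i
    rw [← Ideal.mem_span_singleton]
    change _ ∈ Submodule.span _ _
    rw [← hg]
    exact Ideal.subset_span ⟨i, rfl⟩
  obtain ⟨q, hq⟩ := hdvd
  have hg0 : g ≠ 0 := by
    rintro rfl
    exact hPE (by simpa using hq)
  have hgm : g ∈ Ideal.span (Set.range PE.coeff) := by
    rw [hg]; exact Submodule.mem_span_singleton_self g
  obtain ⟨a, ha⟩ := (Finsupp.mem_ideal_span_range_iff_exists_finsupp).1 hgm
  have ha1 : ∑ i ∈ a.support, a i * q.coeff i = 1 := by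
    apply mul_left_cancel₀ hg0
    rw [mul_one]
    nth_rw 2 [← ha]
    rw [Finsupp.sum, Finset.mul_sum, hq]
    refine Finset.sum_congr rfl fun i _ => ?_
    rw [coeff_C_mul]; ring
  obtain ⟨⟨_, m1, hm1, rfl⟩, G, hG⟩ := IsLocalization.exists_integer_multiple S g
  obtain ⟨⟨_, m2, hm2, rfl⟩, hQ⟩ := IsLocalization.exist_integer_multiples S q.support q.coeff
  obtain ⟨⟨_, m3, hm3, rfl⟩, hu⟩ := IsLocalization.exist_integer_multiples S a.support a
  have hQ' : ∃ Q : D[X][X], Q.map (algebraMap D[X] E[X]) = C (algebraMap D[X] E[X] (C m2)) * q := by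
    rw [← mem_lifts, lifts_iff_coeff_lifts]
    intro i
    rw [coeff_C_mul]
    by_cases hi : i ∈ q.support
    · obtain ⟨w, hw⟩ := hQ i hi
      exact ⟨w, hw.trans (Algebra.smul_def _ _)⟩
    · rw [notMem_support_iff.1 hi, mul_zero]
      exact ⟨0, map_zero _⟩
  obtain ⟨Q, hQ'⟩ := hQ'
  have hu' : ∀ i, ∃ w : D[X], algebraMap D[X] E[X] w = algebraMap D[X] E[X] (C m3) * a i := by
    intro i
    by_cases hi : i ∈ a.support
    · obtain ⟨w, hw⟩ := hu i hi
      exact ⟨w, hw.trans (Algebra.smul_def _ _)⟩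
    · rw [Finsupp.notMem_support_iff.1 hi, mul_zero]
      exact ⟨0, map_zero _⟩
  choose u hu' using hu'
  have hG' : algebraMap D[X] E[X] G = algebraMap D[X] E[X] (C m1) * g :=
    hG.trans (Algebra.smul_def _ _)
  have hm : ∀ {m : D}, m ∈ nonZeroDivisors D → (C m : D[X]) ≠ 0 := fun h =>
    C_ne_zero.2 (nonZeroDivisors.ne_zero h)
  refine ⟨m1 * m2, m3 * m2, G, Q, a.support, u, nonZeroDivisors.ne_zero (mul_mem hm3 hm2),
    fun h => ?_, hinj2 ?_, hinj ?_⟩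
  · rw [h, map_zero, eq_comm, mul_eq_zero, map_eq_zero_iff _ hinj] at hG'
    exact hG'.elim (hm hm1) hg0
  · simp only [coe_mapRingHom, Polynomial.map_mul, map_C, hQ', hG']
    change _ * PE = _
    rw [hq]
    simp only [map_mul]
    ring
  · have hc : ∀ i, algebraMap D[X] E[X] (Q.coeff i) = algebraMap D[X] E[X] (C m2) * q.coeff i := by
      intro i
      rw [← coeff_map, hQ', coeff_C_mul]
    simp only [map_sum, map_mul, hu', hc]
    rw [← mul_one (algebraMap D[X] E[X] (C m3) * algebraMap D[X] E[X] (C m2)), ← ha1,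
      Finset.mul_sum]
    exact Finset.sum_congr rfl fun i _ => by ring

end

section

open Set Polynomial

theorem AlgebraicIndependent.mem_matroid_closure {B M : Type*} [CommRing B] [CommRing M] [IsDomain M]
    [Algebra B M] [FaithfulSMul B M] {s : Set M} {y : M} :
    y ∈ (matroid B M).closure s ↔ IsAlgebraic (Algebra.adjoin B s) y := by
  rw [matroid_closure_eq, SetLike.mem_coe, Subalgebra.mem_algebraicClosure]

namespace Place

variable {M : Type u} {B : Type w} [Field M] [CommRing B] [Algebra B M]

theorem exists_gauss_insert [FaithfulSMul B M] {s : Set M} {x y : M}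
    (hy : y ∈ (AlgebraicIndependent.matroid B M).closure (insert x s))
    (hys : y ∉ (AlgebraicIndependent.matroid B M).closure s) :
    ∃ f : B, f ≠ 0 ∧ ∀ (κ : Type v) [Field κ] (𝔭 : Place M κ),
      (∀ b : B, algebraMap B M b ∈ 𝔭.ring) → 𝔭.val (algebraMap B M f) ≠ 0 →
      𝔭.Gauss B (insert x s) → 𝔭.Gauss B (insert y s) := by
  have : IsDomain B := (FaithfulSMul.algebraMap_injective B M).isDomain
  have hxs : x ∉ s := fun h => hys (by rwa [insert_eq_of_mem h] at hy)
  have hys' : y ∉ s := fun h => hys (Matroid.mem_closure_of_mem _ h (subset_univ _))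
  have hx := Matroid.mem_closure_insert hys hy
  obtain ⟨f₁, hf₁, hyring⟩ :=
    exists_mem_ring.{u, v, w} (AlgebraicIndependent.mem_matroid_closure.1 hy)
  rw [AlgebraicIndependent.mem_matroid_closure] at hx hys
  obtain ⟨p, hp0, hp⟩ := hx
  have hle : ∀ z ∈ Algebra.adjoin B (insert y s),
      ∃ q : (Algebra.adjoin B s)[X], aeval y q = z := by
    intro z hz
    induction hz using Algebra.adjoin_induction with
    | mem z hz =>
      rcases hz with rfl | hz
      · exact ⟨X, aeval_X _⟩
      · exact ⟨C ⟨z, Algebra.subset_adjoin hz⟩, aeval_C _ _⟩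
    | algebraMap b => exact ⟨C (algebraMap _ _ b), aeval_C _ _⟩
    | add _ _ _ _ h h' =>
      obtain ⟨q, rfl⟩ := h
      obtain ⟨q', rfl⟩ := h'
      exact ⟨q + q', map_add _ _ _⟩
    | mul _ _ _ _ h h' =>
      obtain ⟨q, rfl⟩ := h
      obtain ⟨q', rfl⟩ := h'
      exact ⟨q * q', map_mul _ _ _⟩
  let α : (Algebra.adjoin B s)[X] →+* M := (aeval y).toRingHom
  have hα : Function.Injective α := transcendental_iff_injective.1 hys
  obtain ⟨P, hP⟩ : ∃ P : (Algebra.adjoin B s)[X][X], P.map α = p.map (algebraMap _ M) := by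
    rw [← mem_lifts, lifts_iff_coeff_lifts]
    intro i
    rw [coeff_map]
    exact hle _ (p.coeff i).2
  have hP0 : P ≠ 0 := by
    rintro rfl
    rw [Polynomial.map_zero, eq_comm, Polynomial.map_eq_zero_iff Subtype.val_injective] at hP
    exact hp0 hP
  obtain ⟨c, r, G, Q, t, u, hr, hG, hPQ, hu⟩ := exists_C_mul_eq_C_mul hP0
  have hQ : (Q.map α).eval x = 0 := by
    have h := congrArg (fun q => (Polynomial.map α q).eval x) hPQ
    simp only [Polynomial.map_mul, map_C, eval_mul, eval_C, hP] at h
    rw [eval_map_algebraMap, hp, mul_zero, eq_comm, mul_eq_zero, map_eq_zero_iff _ hα] at h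
    exact h.resolve_left hG
  obtain ⟨f₂, hf₂, hrval⟩ := exists_val_ne_zero.{u, v, w} r.2 (by simpa using hr)
  refine ⟨f₁ * f₂, mul_ne_zero hf₁ hf₂, fun κ _ 𝔭 hB hf hT => ?_⟩
  rw [map_mul, 𝔭.val_mul (hB _) (hB _)] at hf
  have hyr := hyring κ 𝔭 hB (left_ne_zero_of_mul hf) hT
  have hsr := (hT.mono (subset_insert x s)).1
  have hrv := hrval κ 𝔭 hB (right_ne_zero_of_mul hf) (hT.mono (subset_insert x s))
  have hysr : insert y s ⊆ (𝔭.ring : Set M) := insert_subset hyr hsr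
  have hxr : x ∈ 𝔭.ring := hT.1 (mem_insert x s)
  have hα' : ∀ q, α q ∈ Algebra.adjoin B (insert y s) := by
    intro q
    induction q using Polynomial.induction_on' with
    | add p q hp hq => rw [map_add]; exact add_mem hp hq
    | monomial n a =>
      change aeval y _ ∈ _
      rw [aeval_monomial]
      exact mul_mem (Algebra.adjoin_mono (subset_insert y s) a.2)
        (pow_mem (Algebra.subset_adjoin (mem_insert y s)) n)
  let α' : (Algebra.adjoin B s)[X] →+* 𝔭.ring :=
    α.codRestrict 𝔭.ring fun q => 𝔭.adjoin_subset_ring hB hysr (hα' q)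
  let ε := 𝔭.res.comp α'
  have hε : ∀ q, ε q = 𝔭.val (α q) := fun q => (𝔭.val_of_mem (α' q).2).symm
  have hQε0 : Q.map ε ≠ 0 := by
    intro h
    apply hrv
    have h1 := congrArg ε hu
    have h2 : ∀ i, ε (Q.coeff i) = 0 := fun i => by rw [← coeff_map, h, coeff_zero]
    simp only [map_sum, map_mul, h2, mul_zero, Finset.sum_const_zero] at h1
    rw [hε] at h1
    simpa [α] using h1.symm
  have hQε : (Q.map ε).eval (𝔭.val x) = 0 := by
    have h1 : (Q.map α').eval ⟨x, hxr⟩ = 0 := by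
      apply Subtype.val_injective
      rw [ZeroMemClass.coe_zero, ← hQ]
      change 𝔭.ring.subtype _ = _
      rw [← eval_map_apply, Polynomial.map_map]
      rfl
    rw [𝔭.val_of_mem hxr, ← Polynomial.map_map, eval_map_apply, h1, map_zero]
  have hxalg : 𝔭.val x ∈ (AlgebraicIndependent.matroid (𝔭.resBase B) κ).closure
      (insert (𝔭.val y) (𝔭.val '' s)) := by
    rw [AlgebraicIndependent.mem_matroid_closure]
    obtain ⟨q, hq⟩ : ∃ q : (Algebra.adjoin (𝔭.resBase B) (insert (𝔭.val y) (𝔭.val '' s)))[X],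
        q.map (algebraMap _ κ) = Q.map ε := by
      rw [← mem_lifts, lifts_iff_coeff_lifts]
      intro i
      rw [coeff_map, hε, ← image_insert_eq]
      exact ⟨⟨_, 𝔭.val_mem_adjoin hB hysr (hα' _)⟩, rfl⟩
    refine ⟨q, ?_, ?_⟩
    · rintro rfl
      exact hQε0 (by rw [← hq, Polynomial.map_zero])
    · rw [← eval_map_algebraMap, hq, hQε]
  refine ⟨hysr, (AlgebraicIndepOn.insert_iff hys').2 ⟨(hT.mono (subset_insert x s)).2, ?_⟩⟩
  intro hyalg
  refine ((AlgebraicIndepOn.insert_iff hxs).1 hT.2).2 ?_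
  rw [← AlgebraicIndependent.mem_matroid_closure] at hyalg ⊢
  rwa [Matroid.closure_insert_eq_of_mem_closure hyalg] at hxalg

end Place
end

section

open Set

theorem Matroid.Indep.exists_mem_sdiff_notMem_closure {α : Type*} {m : Matroid α} {S T : Set α}
    (hS : m.Indep S) (hT : m.Indep T) {y : α} (hy : y ∈ T \ S) (hyS : y ∈ m.closure S) :
    ∃ x ∈ S \ T, y ∉ m.closure (S \ {x}) := by
  by_contra! h
  have h1 : y ∈ m.closure (⋂₀ (insert S ((fun x => S \ {x}) '' (S \ T)))) := by
    rw [hS.closure_sInter_eq_biInter_closure_of_forall_subset (insert_nonempty _ _)]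
    · rw [mem_iInter₂]
      rintro _ (rfl | ⟨x, hx, rfl⟩)
      · exact hyS
      · exact h x hx
    · rintro _ (rfl | ⟨x, hx, rfl⟩)
      · exact subset_rfl
      · exact sdiff_subset
  refine hT.notMem_closure_sdiff_of_mem hy.1 (m.closure_subset_closure ?_ h1)
  intro x hx
  rw [sInter_insert, mem_inter_iff, mem_sInter] at hx
  refine ⟨?_, fun hxy => hy.2 (hxy ▸ hx.1)⟩
  by_contra hxT
  exact (hx.2 _ ⟨x, ⟨hx.1, hxT⟩, rfl⟩).2 rfl

namespace Place

variable {M : Type u} {B : Type w} [Field M] [CommRing B] [Algebra B M]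

open AlgebraicIndependent in
theorem exists_gauss_of_subset_closure [FaithfulSMul B M] {S T : Set M}
    (hS : (matroid B M).Indep S) (hT : (matroid B M).Indep T)
    (hTS : T ⊆ (matroid B M).closure S) (hfin : (T \ S).Finite) :
    ∃ f : B, f ≠ 0 ∧ ∀ (κ : Type v) [Field κ] (𝔭 : Place M κ),
      (∀ b : B, algebraMap B M b ∈ 𝔭.ring) → 𝔭.val (algebraMap B M f) ≠ 0 →
      𝔭.Gauss B S → 𝔭.Gauss B T := by
  have : IsDomain B := (FaithfulSMul.algebraMap_injective B M).isDomain
  induction hn : (T \ S).ncard generalizing S with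
  | zero =>
    rw [ncard_eq_zero hfin, sdiff_eq_empty] at hn
    exact ⟨1, one_ne_zero, fun κ _ 𝔭 _ _ h => h.mono hn⟩
  | succ n ih =>
    obtain ⟨y, hy⟩ : (T \ S).Nonempty := nonempty_of_ncard_ne_zero (by omega)
    obtain ⟨x, hx, hyx⟩ := hS.exists_mem_sdiff_notMem_closure hT hy (hTS hy.1)
    have hins : insert x (S \ {x}) = S := insert_sdiff_self_of_mem hx.1
    obtain ⟨f₁, hf₁, h₁⟩ := exists_gauss_insert.{u, v, w} (B := B) (s := S \ {x}) (x := x) (y := y)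
      (by rw [hins]; exact hTS hy.1) hyx
    have hcl := Matroid.closure_insert_congr (M := matroid B M) (X := S \ {x}) (f := x) (e := y)
      ⟨by rw [hins]; exact hTS hy.1, hyx⟩
    rw [hins] at hcl h₁
    have hind : (matroid B M).Indep (insert y (S \ {x})) :=
      ((hS.subset sdiff_subset).notMem_closure_iff.1 hyx).1
    have hdiff : T \ insert y (S \ {x}) = (T \ S) \ {y} := by
      ext t
      simp only [mem_sdiff, mem_insert_iff, mem_singleton_iff]
      have : t = x → t ∉ T := fun h => h ▸ hx.2
      tauto
    obtain ⟨f₂, hf₂, h₂⟩ := ih hind (by rw [hcl]; exact hTS)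
      (hdiff ▸ hfin.subset sdiff_subset)
      (by rw [hdiff, ncard_sdiff_singleton_of_mem hy, hn]; rfl)
    refine ⟨f₁ * f₂, mul_ne_zero hf₁ hf₂, fun κ _ 𝔭 hB hf hG => ?_⟩
    rw [map_mul, 𝔭.val_mul (hB _) (hB _)] at hf
    exact h₂ κ 𝔭 hB (right_ne_zero_of_mul hf) (h₁ κ 𝔭 hB (left_ne_zero_of_mul hf) hG)

end Place
end

section

open Set

namespace Place

variable {M : Type u} {B : Type w} [Field M] [CommRing B] [Algebra B M]

/-- The place of a valuation subring. -/
noncomputable def ofValuationSubring (V : ValuationSubring M) :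
    Place M (IsLocalRing.ResidueField V.toLocalSubring.toSubring) where
  ring := V.toLocalSubring.toSubring
  res := IsLocalRing.residue V.toLocalSubring.toSubring
  inv_mem x hx := by
    have h : x⁻¹ ∈ V := (V.mem_or_inv_mem x).resolve_left hx
    refine ⟨h, (IsLocalRing.residue_eq_zero_iff _).2 fun hu => hx ?_⟩
    obtain ⟨y, hy⟩ := isUnit_iff_exists_inv.1 hu
    have hy' : x⁻¹ * (y : M) = 1 := congrArg Subtype.val hy
    have : (y : M) = x := by
      rw [← inv_inj]; exact (eq_inv_of_mul_eq_one_left hy').symm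
    exact this ▸ y.2

theorem exists_of_injective {A : Type*} [CommRing A] (α : A →+* M) (hα : Function.Injective α)
    (I : Ideal A) [hI : I.IsPrime] : ∃ (κ : Type u) (_ : Field κ) (𝔭 : Place M κ),
      ∀ a, α a ∈ 𝔭.ring ∧ (𝔭.val (α a) = 0 ↔ a ∈ I) := by
  let e : A ≃+* α.range := RingEquiv.ofBijective α.rangeRestrict
    ⟨fun x y h => hα (congrArg Subtype.val h), α.rangeRestrict_surjective⟩
  let P : Ideal α.range := I.comap e.symm.toRingHom
  have hP : P.IsPrime := hI.comap _
  have hmem : ∀ a, e a ∈ P ↔ a ∈ I := fun a => by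
    change e.symm (e a) ∈ I ↔ _
    rw [e.symm_apply_apply]
  obtain ⟨V, hV, hloc⟩ := (LocalSubring.ofPrime α.range P).exists_le_valuationSubring
  refine ⟨_, _, ofValuationSubring V, fun a => ?_⟩
  have hL : α a ∈ (LocalSubring.ofPrime α.range P).toSubring :=
    LocalSubring.le_ofPrime _ _ (e a).2
  have ha : α a ∈ V := hV hL
  refine ⟨ha, ?_⟩
  rw [val_of_mem _ ha, ← hmem, ← not_iff_not]
  change ¬ IsLocalRing.residue V.toLocalSubring.toSubring ⟨α a, ha⟩ = 0 ↔ _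
  rw [← IsLocalization.AtPrime.to_map_mem_maximal_iff
    (LocalSubring.ofPrime α.range P).toSubring P, IsLocalRing.residue_eq_zero_iff,
    IsLocalRing.mem_maximalIdeal, IsLocalRing.mem_maximalIdeal, mem_nonunits_iff, mem_nonunits_iff,
    not_not, not_not]
  constructor
  · intro h
    exact hloc.1 ⟨α a, hL⟩ h
  · intro h
    exact h.map (Subring.inclusion hV)

theorem exists_gauss {T : Set M} (hT : AlgebraicIndepOn B id T) (Q : Ideal B) [Q.IsPrime] :
    ∃ (κ : Type u) (_ : Field κ) (𝔭 : Place M κ), (∀ b : B, algebraMap B M b ∈ 𝔭.ring) ∧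
      (∀ b : B, 𝔭.val (algebraMap B M b) = 0 ↔ b ∈ Q) ∧ 𝔭.Gauss B T := by
  let θ : MvPolynomial T B →+* MvPolynomial T (B ⧸ Q) := MvPolynomial.map (Ideal.Quotient.mk Q)
  have : (RingHom.ker θ).IsPrime := RingHom.ker_isPrime θ
  obtain ⟨κ, _, 𝔭, h⟩ := exists_of_injective
    (MvPolynomial.aeval (fun x : T => (x : M)) : MvPolynomial T B →ₐ[B] M).toRingHom hT
    (RingHom.ker θ)
  have hB : ∀ b : B, algebraMap B M b ∈ 𝔭.ring := fun b => by
    simpa using (h (MvPolynomial.C b)).1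
  have hQ : ∀ b : B, 𝔭.val (algebraMap B M b) = 0 ↔ b ∈ Q := fun b => by
    have := (h (MvPolynomial.C b)).2
    rw [RingHom.mem_ker, MvPolynomial.map_C, MvPolynomial.C_eq_zero,
      Ideal.Quotient.eq_zero_iff_mem] at this
    rw [← this]
    simp
  have hTr : T ⊆ 𝔭.ring := fun x hx => by
    simpa using (h (MvPolynomial.X ⟨x, hx⟩)).1
  refine ⟨κ, _, 𝔭, hB, hQ, hTr, ?_⟩
  rw [AlgebraicIndepOn, algebraicIndependent_iff]
  intro p hp
  obtain ⟨P, rfl⟩ := MvPolynomial.map_surjective _ (𝔭.toBase_surjective hB) p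
  rw [← (𝔭.val_aeval hB hTr P).2] at hp
  have h1 := (h P).2.1 hp
  rw [RingHom.mem_ker] at h1
  ext i
  rw [MvPolynomial.coeff_map, MvPolynomial.coeff_zero]
  rw [ZeroMemClass.coe_zero, 𝔭.coe_toBase, hQ, ← Ideal.Quotient.eq_zero_iff_mem,
    ← MvPolynomial.coeff_map, h1, MvPolynomial.coeff_zero]

end Place
end

section

open Set

variable {M : Type u} {B : Type w} [Field M] [CommRing B] [Algebra B M]

theorem AlgebraicIndependent.map_mem_matroid_closure [FaithfulSMul B M] {τ : M →+* M}
    (hτ : ∀ b : B, ∃ c : B, algebraMap B M c = τ (algebraMap B M b)) {S : Set M} {x : M}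
    (hx : x ∈ (matroid B M).closure S) : τ x ∈ (matroid B M).closure (τ '' S) := by
  rw [mem_matroid_closure] at hx ⊢
  obtain ⟨p, hp0, hp⟩ := hx
  have hmap : ∀ a ∈ Algebra.adjoin B S, τ a ∈ Algebra.adjoin B (τ '' S) := by
    intro a ha
    induction ha using Algebra.adjoin_induction with
    | mem a ha => exact Algebra.subset_adjoin ⟨a, ha, rfl⟩
    | algebraMap b =>
      obtain ⟨c, hc⟩ := hτ b
      exact hc ▸ Subalgebra.algebraMap_mem _ c
    | add _ _ _ _ h h' => rw [map_add]; exact add_mem h h'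
    | mul _ _ _ _ h h' => rw [map_mul]; exact mul_mem h h'
  obtain ⟨q, hq⟩ : ∃ q : Polynomial (Algebra.adjoin B (τ '' S)),
      q.map (algebraMap _ M) = p.map (τ.comp (algebraMap _ M)) := by
    rw [← Polynomial.mem_lifts, Polynomial.lifts_iff_coeff_lifts]
    intro i
    rw [Polynomial.coeff_map]
    exact ⟨⟨_, hmap _ (p.coeff i).2⟩, rfl⟩
  refine ⟨q, ?_, ?_⟩
  · rintro rfl
    have hinj : Function.Injective (τ.comp (algebraMap (Algebra.adjoin B S) M)) :=
      τ.injective.comp Subtype.val_injective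
    rw [Polynomial.map_zero, eq_comm, Polynomial.map_eq_zero_iff hinj] at hq
    exact hp0 hq
  · rw [← Polynomial.eval_map_algebraMap, hq, ← Polynomial.map_map, Polynomial.eval_map_apply,
      Polynomial.eval_map_algebraMap, hp, map_zero]

namespace Place

open AlgebraicIndependent in
theorem exists_forall_mem_ring [FaithfulSMul B M] (τ : M →+* M)
    (hτ : ∀ b : B, ∃ c : B, algebraMap B M c = τ (algebraMap B M b))
    (z : ℕ → M) {P : ℕ} (hP : 1 ≤ P) (hz : ∀ j, τ (z j) = z (j + P)) :
    ∃ f : B, f ≠ 0 ∧ ∀ (Q : Ideal B) [Q.IsPrime],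
      (∀ (j : ℕ) (g : B), algebraMap B M g = τ^[j] (algebraMap B M f) → g ∉ Q) →
      ∃ (κ : Type u) (_ : Field κ) (𝔭 : Place M κ), (∀ b : B, algebraMap B M b ∈ 𝔭.ring) ∧
        (∀ j, z j ∈ 𝔭.ring) ∧ ∀ q ∈ Q, 𝔭.val (algebraMap B M q) = 0 := by
  have : IsDomain B := (FaithfulSMul.algebraMap_injective B M).isDomain
  obtain ⟨T₀, N, hT₀, hτT₀, hsub, hfin, hzN⟩ := Matroid.exists_indep_image_subset_closure
    (matroid_e B M) τ (fun S x => map_mem_matroid_closure hτ) z hP hz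
  obtain ⟨T, hT, hT₀T⟩ := hT₀.exists_isBase_superset
  obtain ⟨f₁, hf₁, h₁⟩ := exists_gauss_of_subset_closure.{u, u, w} hT₀ hτT₀ hsub hfin
  have h₂ := fun j : ℕ => exists_mem_ring.{u, u, w}
    (mem_matroid_closure.1 (hzN (N + j) (Nat.le_add_right N j)))
  choose f₂ hf₂ h₂ using h₂
  have h₃ := fun j : ℕ => exists_mem_ring.{u, u, w} (B := B) (T := T) (y := z j)
    (mem_matroid_closure.1 (by rw [hT.closure_eq, matroid_e]; trivial))
  choose f₃ hf₃ h₃ using h₃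
  let f := f₁ * ((∏ r ∈ Finset.range P, f₂ r) * ∏ j ∈ Finset.range N, f₃ j)
  refine ⟨f, mul_ne_zero hf₁ (mul_ne_zero (Finset.prod_ne_zero_iff.2 fun r _ => hf₂ r)
    (Finset.prod_ne_zero_iff.2 fun r _ => hf₃ r)), fun Q _ hQ => ?_⟩
  obtain ⟨κ, _, 𝔭, hB, hBQ, hG⟩ := exists_gauss hT.indep Q
  have hτj : ∀ j, ∀ b : B, ∃ c : B, algebraMap B M c = (τ ^ j) (algebraMap B M b) := by
    intro j
    induction j with
    | zero => exact fun b => ⟨b, rfl⟩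
    | succ j ih =>
      intro b
      obtain ⟨c, hc⟩ := hτ b
      obtain ⟨d, hd⟩ := ih c
      exact ⟨d, by rw [hd, hc, pow_succ]; rfl⟩
  have hBj : ∀ j, ∀ b : B, algebraMap B M b ∈ (𝔭.comap (τ ^ j)).ring := fun j b => by
    obtain ⟨c, hc⟩ := hτj j b
    rw [mem_comap, ← hc]
    exact hB c
  have hfj : ∀ j, (𝔭.comap (τ ^ j)).val (algebraMap B M f) ≠ 0 := fun j => by
    obtain ⟨c, hc⟩ := hτj j f
    rw [val_comap, ← hc, Ne, hBQ]
    exact hQ j c (by rw [hc, RingHom.coe_pow])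
  have hdvd : ∀ j g, g ∣ f → (𝔭.comap (τ ^ j)).val (algebraMap B M g) ≠ 0 := by
    rintro j g ⟨h, hg⟩ h0
    apply hfj j
    rw [hg, map_mul, val_mul _ (hBj j _) (hBj j _), h0, zero_mul]
  have hGj : ∀ j, (𝔭.comap (τ ^ j)).Gauss B T₀ := by
    intro j
    induction j with
    | zero =>
      refine Gauss.comap (hτj 0) ?_
      rw [pow_zero, RingHom.coe_one, image_id]
      exact hG.mono hT₀T
    | succ j ih =>
      rw [pow_succ]
      exact Gauss.comap (𝔭 := 𝔭.comap (τ ^ j)) (τ := τ) hτ (h₁ κ _ (hBj j) (hdvd j _ (Dvd.intro _ rfl)) ih)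
  refine ⟨κ, _, 𝔭, hB, fun j => ?_, fun q hq => (hBQ q).2 hq⟩
  rcases lt_or_ge j N with hj | hj
  · refine h₃ j κ 𝔭 hB ?_ hG
    exact hdvd 0 _ (dvd_mul_of_dvd_right (dvd_mul_of_dvd_right
      (Finset.dvd_prod_of_mem f₃ (Finset.mem_range.2 hj)) _) _)
  · obtain ⟨i, rfl⟩ := Nat.exists_eq_add_of_le hj
    have hiter : ∀ n r, τ^[n] (z r) = z (r + n * P) := by
      intro n
      induction n with
      | zero => simp
      | succ n ih =>
        intro r
        rw [Function.iterate_succ_apply, hz, ih]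
        congr 1
        ring
    have h := h₂ (i % P) κ (𝔭.comap (τ ^ (i / P))) (hBj _) (hdvd _ _ (dvd_mul_of_dvd_right
      (dvd_mul_of_dvd_left (Finset.dvd_prod_of_mem f₂
        (Finset.mem_range.2 (Nat.mod_lt _ hP))) _) _)) (hGj _)
    rw [mem_comap, RingHom.coe_pow, hiter, add_assoc, mul_comm, Nat.mod_add_div] at h
    exact h

end Place
end

section

open Set
open scoped TensorProduct

theorem LinearIndependent.eq_zero_of_sum_tmul_eq_zero {k K N ι : Type*} [Field k] [AddCommGroup K]
    [Module k K] [AddCommGroup N] [Module k N] {v : ι → K} (hv : LinearIndependent k v)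
    {s : Finset ι} {c : ι → N} (h : ∑ i ∈ s, v i ⊗ₜ[k] c i = 0) {i : ι} (hi : i ∈ s) :
    c i = 0 := by
  classical
  obtain ⟨g, hg⟩ := LinearMap.exists_leftInverse_of_injective _ (LinearMap.ker_eq_bot.2 hv)
  have hgv : ∀ j, g (v j) = Finsupp.single j 1 := fun j => by
    simpa using LinearMap.congr_fun hg (Finsupp.single j 1)
  have h1 := congrArg (fun x => TensorProduct.lid k N ((Finsupp.lapply i ∘ₗ g).rTensor N x)) h
  simp only [map_sum, LinearMap.rTensor_tmul, LinearMap.comp_apply, hgv, Finsupp.lapply_apply,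
    TensorProduct.lid_tmul, map_zero, Finsupp.single_apply, ite_smul, one_smul, zero_smul] at h1
  rw [Finset.sum_ite_eq' s i c, if_pos hi] at h1
  exact h1

/-- Specializations of a difference subring of constants extend to places. -/
theorem exists_place_of_constants {k K A : Type*} {M : Type u} [Field k] [Field K] [Field M]
    [CommRing A] [Algebra k K] [Algebra k A] (φ : K →ₐ[k] K)
    (hfix : ∀ (m : ℕ) a, 1 ≤ m → (φ ^ m) a = a → a ∈ range (algebraMap k K)) [Algebra k M]
    (i : K →ₐ[k] M) (j : A →ₐ[k] M) (hj : Function.Injective j)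
    (ψ : M →+* M) (hψi : ∀ a, ψ (i a) = i (φ a)) (hψj : ∀ a, ψ (j a) = j a)
    (σ : K →+* K) (ς : k →+* k) (hς : ∀ c, algebraMap k K (ς c) = σ (algebraMap k K c))
    (hsurj : Function.Surjective ς) (α : A →+* A) (τ : M →+* M)
    (hτi : ∀ a, τ (i a) = i (σ a)) (hτj : ∀ a, τ (j a) = j (α a))
    (z : ℕ → M) {P : ℕ} (hP : 1 ≤ P) (hz : ∀ n, τ (z n) = z (n + P)) :
    ∃ b : A, b ≠ 0 ∧ ∀ (q : Ideal A) [q.IsPrime], (∀ n, α^[n] b ∉ q) →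
      ∃ (κ : Type u) (_ : Field κ) (𝔭 : Place M κ), (∀ a, i a ∈ 𝔭.ring) ∧
        (∀ n, z n ∈ 𝔭.ring) ∧ ∀ a ∈ q, j a ∈ 𝔭.ring ∧ 𝔭.val (j a) = 0 := by
  let ι := Algebra.TensorProduct.productMap i j
  have hι : Function.Injective ι :=
    productMap_injective_of_fixed φ (fun a ha => hfix 1 a le_rfl (by rwa [pow_one]))
      ψ i j hj hψi hψj
  let : Algebra (K ⊗[k] A) M := ι.toRingHom.toAlgebra
  have halg : ∀ x, algebraMap (K ⊗[k] A) M x = ι x := fun _ => rfl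
  have : FaithfulSMul (K ⊗[k] A) M := (faithfulSMul_iff_algebraMap_injective _ _).2 hι
  have hτ : ∀ x : K ⊗[k] A, ∃ y : K ⊗[k] A, algebraMap _ M y = τ (algebraMap _ M x) := by
    intro x
    induction x with
    | zero => exact ⟨0, by simp⟩
    | tmul x a => exact ⟨σ x ⊗ₜ α a, by simp [halg, ι, hτi, hτj]⟩
    | add x y hx hy =>
      obtain ⟨x', hx'⟩ := hx
      obtain ⟨y', hy'⟩ := hy
      exact ⟨x' + y', by rw [map_add, map_add, map_add, hx', hy']⟩
  obtain ⟨f, hf, h⟩ := Place.exists_forall_mem_ring τ hτ z hP hz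
  let ℬ := Module.Basis.ofVectorSpace k K
  obtain ⟨c, rfl⟩ := TensorProduct.eq_repr_basis_left ℬ f
  have hc : c ≠ 0 := by
    rintro rfl
    exact hf Finsupp.sum_zero_index
  obtain ⟨i₀, hi₀⟩ := Finsupp.support_nonempty_iff.2 hc
  refine ⟨c i₀, Finsupp.mem_support_iff.1 hi₀, fun q _ hq => ?_⟩
  let F := FractionRing (A ⧸ q)
  have := tensorProduct_isDomain_of_fixed φ hfix F
  let θ : K ⊗[k] A →ₐ[k] K ⊗[k] F :=
    Algebra.TensorProduct.map (AlgHom.id k K) (IsScalarTower.toAlgHom k A F)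
  have hker : ∀ a : A, algebraMap A F a = 0 ↔ a ∈ q := fun a => by
    rw [IsScalarTower.algebraMap_apply A (A ⧸ q) F,
      map_eq_zero_iff _ (IsFractionRing.injective (A ⧸ q) F)]
    exact Ideal.Quotient.eq_zero_iff_mem
  have : (RingHom.ker θ).IsPrime := RingHom.ker_isPrime θ
  have hindep : ∀ n, LinearIndependent k fun l => σ^[n] (ℬ l) := by
    intro n
    induction n with
    | zero => exact ℬ.linearIndependent
    | succ n ih =>
      have h1 := ih.map_of_surjective_injective ς σ.toAddMonoidHom hsurj
        (fun m hm => (map_eq_zero σ).1 hm)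
        (fun r m => by
          change σ (r • m) = ς r • σ m
          rw [Algebra.smul_def, Algebra.smul_def, map_mul, hς])
      simpa [Function.comp_def, Function.iterate_succ_apply'] using h1
  obtain ⟨κ, _, 𝔭, hB, hzr, hval⟩ := h (RingHom.ker θ) (fun n g hg hgker => by
    have hiter : ∀ (n : ℕ), τ^[n] (ι (c.sum fun l a => ℬ l ⊗ₜ a)) =
        ι (∑ l ∈ c.support, σ^[n] (ℬ l) ⊗ₜ α^[n] (c l)) := by
      intro n
      induction n with
      | zero => rfl
      | succ n ih =>
        rw [Function.iterate_succ_apply', ih]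
        simp [ι, hτi, hτj, Function.iterate_succ_apply']
    rw [halg, halg, hiter] at hg
    rw [hι hg, RingHom.mem_ker, map_sum] at hgker
    simp only [θ, Algebra.TensorProduct.map_tmul, AlgHom.id_apply] at hgker
    have h0 := (hindep n).eq_zero_of_sum_tmul_eq_zero hgker hi₀
    exact hq n ((hker _).1 h0))
  refine ⟨κ, _, 𝔭, fun a => ?_, hzr, fun a ha => ?_⟩
  · simpa [halg, ι] using hB (a ⊗ₜ 1)
  · have hja : algebraMap (K ⊗[k] A) M (1 ⊗ₜ a) = j a := by simp [halg, ι]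
    rw [← hja]
    refine ⟨hB _, hval _ ?_⟩
    rw [RingHom.mem_ker]
    have : algebraMap A F a = 0 := (hker a).2 ha
    simp [θ, this]

end

section

open Set

theorem iterate_map_of_comm {R : Type*} [CommRing R] {Φ χ : R →+* R} (h : Φ.comp χ = χ.comp Φ)
    {x : R} (hx : Φ x = x) (n : ℕ) : Φ (χ^[n] x) = χ^[n] x := by
  induction n with
  | zero => exact hx
  | succ n ih =>
    rw [Function.iterate_succ_apply', show Φ (χ _) = χ (Φ _) from RingHom.congr_fun h _, ih]

/-- An endomorphism under which a prime ideal is its own preimage extends to the residue field. -/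
theorem exists_ringHom_fractionRing_quotient {R : Type*} [CommRing R] (p : Ideal R) [p.IsPrime]
    (χ : R →+* R) (h : p.comap χ = p) :
    ∃ χ' : FractionRing (R ⧸ p) →+* FractionRing (R ⧸ p),
      ∀ x, χ' (algebraMap R _ x) = algebraMap R _ (χ x) := by
  let f : R ⧸ p →+* R ⧸ p := Ideal.quotientMap p χ h.ge
  have hf : Function.Injective f := Ideal.quotientMap_injective' h.le
  refine ⟨IsFractionRing.map hf, fun x => ?_⟩
  rw [IsScalarTower.algebraMap_apply R (R ⧸ p), IsScalarTower.algebraMap_apply R (R ⧸ p)]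
  exact IsLocalization.map_eq _ _

theorem PseudoDomain.finite_minimalPrimes {R : Type*} [CommRing R] {φ : R →+* R}
    (h : PseudoDomain φ) : (minimalPrimes R).Finite := by
  obtain ⟨d, -, q, hq, -, h0⟩ := h
  refine ((Finset.range d).finite_toSet.image fun i => q.comap (φ ^ i)).subset fun p hp => ?_
  have hle : (Finset.range d).inf (fun i => q.comap (φ ^ i)) ≤ p := by
    rw [Finset.inf_eq_iInf, ← h0]
    exact bot_le
  obtain ⟨i, hi, hip⟩ := (Ideal.IsPrime.inf_le' hp.1.1).1 hle
  exact ⟨i, hi, hip.antisymm (hp.2 ⟨inferInstance, bot_le⟩ hip)⟩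

theorem DiffSimple.eq_bot_of_mem {R : Type*} [CommRing R] {φ : R →+* R} (h : DiffSimple φ)
    {I : Ideal R} (hI : ∀ x ∈ I, φ x ∈ I) (h1 : (1 : R) ∉ I) : I = ⊥ :=
  (h.2 I hI).resolve_right fun ht => h1 (ht ▸ Submodule.mem_top)

theorem DiffSimple.injective_of_comm {R : Type*} [CommRing R] {φ : R →+* R} (h : DiffSimple φ)
    {χ : R →+* R} (hχ : φ.comp χ = χ.comp φ) : Function.Injective χ := by
  rw [RingHom.injective_iff_ker_eq_bot]
  refine h.eq_bot_of_mem (fun x hx => ?_) fun h1 => ?_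
  · rw [RingHom.mem_ker] at hx ⊢
    rw [← RingHom.comp_apply, ← hχ, RingHom.comp_apply, hx, map_zero]
  · rw [RingHom.mem_ker, map_one] at h1
    exact h.1 ((Ideal.eq_top_iff_one _).2 (by rw [h1]; exact zero_mem _))

theorem DiffSimple.exists_mul_eq_one {R : Type*} [CommRing R] {φ : R →+* R} (h : DiffSimple φ)
    {x : R} (hx : φ x = x) (h0 : x ≠ 0) : ∃ y, φ y = y ∧ x * y = 1 := by
  have ht : Ideal.span {x} = ⊤ := (h.2 _ fun y hy => by
    obtain ⟨r, rfl⟩ := Ideal.mem_span_singleton'.1 hy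
    rw [map_mul, hx]
    exact Ideal.mul_mem_left _ _ (Ideal.mem_span_singleton_self x)).resolve_left fun hb =>
      h0 (Ideal.span_singleton_eq_bot.1 hb)
  obtain ⟨y, hy⟩ := isUnit_iff_exists_inv.1 (Ideal.span_singleton_eq_top.1 ht)
  refine ⟨y, ?_, hy⟩
  have h1 : x * φ y = 1 := by simpa only [map_mul, map_one, hx] using congrArg φ hy
  calc φ y = (x * y) * φ y := by rw [hy, one_mul]
    _ = y * (x * φ y) := by ring
    _ = y := by rw [h1, mul_one]

/-- Finitely many orbits can be merged into a single sequence that is shifted by the map. -/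
theorem exists_sequence_of_finset {R : Type*} [Zero R] (f : R → R)
    (T : Finset R) : ∃ (N : ℕ) (w : ℕ → R), 1 ≤ N ∧ (∀ j, f (w j) = w (j + N)) ∧
      ∀ t ∈ T, ∀ n : ℕ, f^[n] t ∈ range w := by
  classical
  obtain ⟨l, hl⟩ : ∃ l : List R, ∀ t ∈ T, t ∈ l := ⟨T.toList, fun t ht => T.mem_toList.2 ht⟩
  refine ⟨l.length + 1, fun j => f^[j / (l.length + 1)] (l.getD (j % (l.length + 1)) 0),
    by omega, fun j => ?_, fun t ht n => ?_⟩
  · simp only [Nat.add_mod_right, Nat.add_div_right j (Nat.succ_pos _),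
      Function.iterate_succ_apply']
  · obtain ⟨i, hi, rfl⟩ := List.getElem_of_mem (hl t ht)
    refine ⟨i + (l.length + 1) * n, ?_⟩
    have h1 : (i + (l.length + 1) * n) / (l.length + 1) = n := by
      rw [Nat.add_mul_div_left _ _ (Nat.succ_pos _), Nat.div_eq_of_lt (by omega), zero_add]
    have h2 : (i + (l.length + 1) * n) % (l.length + 1) = i := by
      rw [Nat.add_mul_mod_self_left, Nat.mod_eq_of_lt (by omega)]
    simp only [h1, h2]
    rw [List.getD_eq_getElem _ _ hi]

section genSubring

variable {K R : Type*} [CommRing K] [CommRing R] [Algebra K R] {φ σ : K →+* K}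
  {Φ σ' : R →+* R}

theorem genSubring_mono {X Y : Set R} (h : X ⊆ Y) : genSubring φ σ' X ≤ genSubring φ σ' Y := by
  refine Subring.closure_mono (union_subset_union_right _ ?_)
  rintro _ ⟨g, hg, n, rfl⟩
  exact ⟨g, h hg, n, rfl⟩

theorem iterate_mem_genSubring {X : Set R} {x : R} (hx : x ∈ X) (n : ℕ) :
    σ'^[n] x ∈ genSubring φ σ' X :=
  Subring.subset_closure (Or.inr ⟨x, hx, n, rfl⟩)

theorem algebraMap_mem_genSubring (X : Set R) {a : K} (ha : φ a = a) :
    algebraMap K R a ∈ genSubring φ σ' X :=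
  Subring.subset_closure (Or.inl ⟨a, ha, rfl⟩)

theorem map_eq_of_mem_genSubring (hΦ : ∀ a, Φ (algebraMap K R a) = algebraMap K R (φ a))
    (hcomm : Φ.comp σ' = σ'.comp Φ) {X : Set R} (hX : ∀ x ∈ X, Φ x = x) {x : R}
    (hx : x ∈ genSubring φ σ' X) : Φ x = x := by
  have h : genSubring φ σ' X ≤ Φ.eqLocus (RingHom.id R) := by
    refine Subring.closure_le.2 ?_
    rintro _ (⟨a, ha, rfl⟩ | ⟨g, hg, n, rfl⟩)
    · change Φ _ = _
      rw [hΦ, ha]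
      rfl
    · exact iterate_map_of_comm hcomm (hX g hg) n
  exact h hx

theorem map_mem_genSubring (hcomm : φ.comp σ = σ.comp φ)
    (hσ : ∀ a, σ' (algebraMap K R a) = algebraMap K R (σ a)) {X : Set R} {x : R}
    (hx : x ∈ genSubring φ σ' X) : σ' x ∈ genSubring φ σ' X := by
  have h : genSubring φ σ' X ≤ (genSubring φ σ' X).comap σ' := by
    refine Subring.closure_le.2 ?_
    rintro _ (⟨a, ha, rfl⟩ | ⟨g, hg, n, rfl⟩)
    · change σ' (algebraMap K R a) ∈ genSubring φ σ' X
      rw [hσ]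
      exact algebraMap_mem_genSubring X (iterate_map_of_comm hcomm ha 1)
    · change σ' (σ'^[n] g) ∈ genSubring φ σ' X
      rw [← Function.iterate_succ_apply' σ']
      exact iterate_mem_genSubring hg _
  exact h hx

end genSubring

end

section

open Set

/-- The field of `φ`-constants of `K`. -/
abbrev fixedField {K : Type*} [Field K] (φ : K →+* K) : Subfield K :=
  φ.eqLocusField (RingHom.id K)

/-- The powers of `φ` are linear over the `φ`-constants. -/
def powAlgHom {K : Type*} [Field K] (φ : K →+* K) (m : ℕ) : K →ₐ[fixedField φ] K :=
  { φ ^ m with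
    commutes' := fun c => by
      change (φ ^ m) c.1 = c.1
      rw [RingHom.coe_pow]
      exact Function.iterate_fixed c.2 m }

theorem powAlgHom_apply {K : Type*} [Field K] (φ : K →+* K) (m : ℕ) (a : K) :
    powAlgHom φ m a = φ^[m] a :=
  congrFun (RingHom.coe_pow φ m) a

theorem powAlgHom_pow_apply {K : Type*} [Field K] (φ : K →+* K) (m n : ℕ) (a : K) :
    (powAlgHom φ m ^ n) a = φ^[m * n] a := by
  induction n with
  | zero => rfl
  | succ n ih =>
    rw [pow_succ', AlgHom.mul_apply, ih, powAlgHom_apply, ← Function.iterate_add_apply]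
    congr 1
    ring_nf

theorem eq_zero_of_map_eq_zero {R M : Type*} [CommRing R] [Field M] {Φ : R →+* R}
    (hinv : ∀ x, Φ x = x → x ≠ 0 → ∃ y, Φ y = y ∧ x * y = 1) (π : R →+* M) {x : R}
    (hx : Φ x = x) (h0 : π x = 0) : x = 0 := by
  by_contra hne
  obtain ⟨y, -, hy⟩ := hinv x hx hne
  exact one_ne_zero (by rw [← map_one π, ← hy, map_mul, h0, zero_mul])

theorem exists_finset_generators_constants {K R M : Type*} [Field K] [CommRing R] [Field M]
    [Algebra K R] [Algebra K M] (φ σ : K →+* K)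
    (hper : ∀ (a : K) (m : ℕ), 1 ≤ m → φ^[m] a = a → φ a = a)
    (Φ σ' : R →+* R) (hcommR : Φ.comp σ' = σ'.comp Φ)
    (hΦ : ∀ a : K, Φ (algebraMap K R a) = algebraMap K R (φ a))
    (hσ : ∀ a : K, σ' (algebraMap K R a) = algebraMap K R (σ a))
    (hinv : ∀ x, Φ x = x → x ≠ 0 → ∃ y, Φ y = y ∧ x * y = 1)
    (π : R →ₐ[K] M) (ψ τ : M →+* M) {m e : ℕ} (hm : 1 ≤ m)
    (hψ : ∀ x, ψ (π x) = π (Φ^[m] x)) (hτ : ∀ x, τ (π x) = π (σ'^[e] x))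
    (z : ℕ → R) {P : ℕ} (hP : 1 ≤ P) (hz : ∀ n, σ'^[e] (z n) = z (n + P))
    (hgen : Algebra.adjoin K (range z) = ⊤) :
    ∃ S : Finset R, (∀ s ∈ S, Φ s = s) ∧ ∀ x : R, Φ x = x → ∃ a b : R,
      a ∈ genSubring φ σ' (↑S : Set R) ∧ b ∈ genSubring φ σ' (↑S : Set R) ∧
        b ≠ 0 ∧ x * b = a := by
  classical
  have : Nontrivial R := (π : R →+* M).domain_nontrivial
  let k := fixedField φ
  let i : K →ₐ[k] M := (Algebra.ofId K M).restrictScalars k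
  have hi : ∀ a, i a = π (algebraMap K R a) := fun a => (π.commutes a).symm
  let L : IntermediateField k M :=
    { carrier := {y | ∃ x, Φ x = x ∧ π x = y}
      mul_mem' := by
        rintro _ _ ⟨x, hx, rfl⟩ ⟨y, hy, rfl⟩
        exact ⟨x * y, by rw [map_mul, hx, hy], map_mul _ _ _⟩
      add_mem' := by
        rintro _ _ ⟨x, hx, rfl⟩ ⟨y, hy, rfl⟩
        exact ⟨x + y, by rw [map_add, hx, hy], map_add _ _ _⟩
      algebraMap_mem' := fun c => ⟨algebraMap K R c, by rw [hΦ, show φ c = c from c.2], (hi c.1).symm⟩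
      inv_mem' := by
        rintro _ ⟨x, hx, rfl⟩
        rcases eq_or_ne x 0 with rfl | h0
        · exact ⟨0, map_zero _, by simp⟩
        · obtain ⟨y, hy, hxy⟩ := hinv x hx h0
          exact ⟨y, hy, eq_inv_of_mul_eq_one_right (by rw [← map_mul, hxy, map_one])⟩ }
  have hL : ∀ x, x ∈ L ↔ ∃ y, Φ y = y ∧ π y = x := fun _ => Iff.rfl
  have hψi : ∀ a, ψ (i a) = i (powAlgHom φ m a) := fun a => by
    rw [hi, hψ, hi, powAlgHom_apply, Function.Semiconj.iterate_right
      (f := algebraMap K R) (ga := φ) (gb := Φ) (fun a => (hΦ a).symm) m a]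
  have hψL : ∀ x : L, ψ (L.val x) = L.val x := by
    rintro ⟨_, y, hy, rfl⟩
    exact (hψ y).trans (congrArg π (Function.iterate_fixed hy m))
  have hinj := productMap_injective_of_fixed (powAlgHom φ m)
    (fun a ha => ⟨⟨a, hper a m hm (by rwa [← powAlgHom_apply])⟩, rfl⟩) ψ i L.val
    L.val.injective hψi hψL
  have hle : ∀ x, π x ∈ Subfield.closure (range i ∪ range fun n => π (z n)) := by
    intro x
    have hx : x ∈ Algebra.adjoin K (range z) := hgen ▸ Algebra.mem_top
    induction hx using Algebra.adjoin_induction with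
    | mem x hx =>
      obtain ⟨n, rfl⟩ := hx
      exact Subfield.subset_closure (Or.inr ⟨n, rfl⟩)
    | algebraMap a => exact Subfield.subset_closure (Or.inl ⟨a, hi a⟩)
    | add x y _ _ hx hy => rw [map_add]; exact add_mem hx hy
    | mul x y _ _ hx hy => rw [map_mul]; exact mul_mem hx hy
  have hτn : ∀ n x, τ^[n] (π x) = π (σ'^[e * n] x) := by
    intro n
    induction n with
    | zero => exact fun _ => rfl
    | succ n ih =>
      intro x
      rw [Function.iterate_succ_apply, hτ, ih, ← Function.iterate_add_apply, Nat.mul_succ]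
  obtain ⟨T, hTL, hT⟩ := exists_finset_generators τ (range i) L
    (by
      rintro _ ⟨a, rfl⟩
      refine ⟨σ^[e] a, ?_⟩
      rw [hi, hi, hτ, Function.Semiconj.iterate_right
        (f := algebraMap K R) (ga := σ) (gb := σ') (fun a => (hσ a).symm) e a])
    (by
      rintro _ ⟨x, hx, rfl⟩
      exact ⟨σ'^[e] x, iterate_map_of_comm hcommR hx e, (hτ x).symm⟩)
    (fun n => π (z n)) hP (fun n => by rw [hτ, hz])
    (by
      rintro _ ⟨x, -, rfl⟩
      exact hle x)
  obtain ⟨S, hS, rfl⟩ := Finset.subset_set_image_iff.1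
    (show (T : Set M) ⊆ π '' {x | Φ x = x} from hTL)
  refine ⟨S, hS, fun x hx => ?_⟩
  let O : Set M := {x | ∃ t ∈ S.image π, ∃ n : ℕ, τ^[n] t = x}
  let E : IntermediateField k M := IntermediateField.adjoin k O
  have hEL : E ≤ L := by
    refine IntermediateField.adjoin_le_iff.2 ?_
    rintro _ ⟨t, ht, n, rfl⟩
    obtain ⟨s, hs, rfl⟩ := Finset.mem_image.1 ht
    exact ⟨σ'^[e * n] s, iterate_map_of_comm hcommR (hS hs) _, (hτn n s).symm⟩
  have hxE : π x ∈ E := mem_of_mem_closure_union i hEL hinj (⟨x, hx, rfl⟩ : π x ∈ L)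
    (Subfield.closure_mono
      (union_subset_union_left _ (IntermediateField.subset_adjoin k O)) (hT ⟨x, hx, rfl⟩))
  have hxE' : π x ∈ Subfield.closure (range (algebraMap k M) ∪ O) := hxE
  have hsub : Subring.closure (range (algebraMap k M) ∪ O) ≤
      (genSubring φ σ' (↑S : Set R)).map (π : R →+* M) := by
    refine Subring.closure_le.2 ?_
    rintro _ (⟨c, rfl⟩ | ⟨t, ht, n, rfl⟩)
    · exact ⟨algebraMap K R c, algebraMap_mem_genSubring _ c.2, (hi c.1).symm⟩
    · obtain ⟨s, hs, rfl⟩ := Finset.mem_image.1 ht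
      exact ⟨_, iterate_mem_genSubring hs (e * n), (hτn n s).symm⟩
  obtain ⟨_, hy, _, hu, hdiv⟩ := Subfield.mem_closure_iff.1 hxE'
  obtain ⟨a, ha, rfl⟩ := hsub hy
  obtain ⟨b, hb, rfl⟩ := hsub hu
  rcases eq_or_ne b 0 with rfl | hb0
  · refine ⟨0, 1, zero_mem _, one_mem _, one_ne_zero, ?_⟩
    rw [eq_zero_of_map_eq_zero hinv (π : R →+* M) hx (by simpa using hdiv.symm), zero_mul]
  · have hfix : ∀ y ∈ genSubring φ σ' (↑S : Set R), Φ y = y := fun y hy =>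
      map_eq_of_mem_genSubring hΦ hcommR hS hy
    refine ⟨a, b, ha, hb, hb0, sub_eq_zero.1 (eq_zero_of_map_eq_zero hinv (π : R →+* M) ?_ ?_)⟩
    · rw [map_sub, map_mul, hx, hfix a ha, hfix b hb]
    · have hb1 : (π : R →+* M) b ≠ 0 := fun h =>
        hb0 (eq_zero_of_map_eq_zero hinv (π : R →+* M) (hfix b hb) h)
      rw [map_sub, map_mul, sub_eq_zero]
      exact ((div_eq_iff hb1).1 hdiv).symm

end

section

open Set

theorem exists_iterate_eq_of_surjOn {X : Type*} {s : Set X} {f : X → X}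
    (h : ∀ a ∈ s, ∃ b ∈ s, f b = a) (n : ℕ) : ∀ a ∈ s, ∃ b ∈ s, f^[n] b = a := by
  induction n with
  | zero => exact fun a ha => ⟨a, ha, rfl⟩
  | succ n ih =>
    intro a ha
    obtain ⟨b, hb, rfl⟩ := h a ha
    obtain ⟨c, hc, rfl⟩ := ih b hb
    exact ⟨c, hc, Function.iterate_succ_apply' f n c⟩

/-- After adjoining the orbit of an inverse, every element is a fraction with denominator in the
original subring. -/
theorem exists_isUnit_mul_mem_genSubring {K R : Type*} [CommRing K] [CommRing R] [Algebra K R]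
    {φ : K →+* K} {σ' : R →+* R} {X : Set R} {b c : R}
    (hσb : ∀ n : ℕ, σ'^[n] b ∈ genSubring φ σ' X) (hbc : b * c = 1) {v : R}
    (hv : v ∈ genSubring φ σ' (X ∪ {c})) :
    ∃ u ∈ genSubring φ σ' X, IsUnit u ∧ v * u ∈ genSubring φ σ' X := by
  induction hv using Subring.closure_induction with
  | mem v hv =>
    rcases hv with ⟨a, ha, rfl⟩ | ⟨g, hg | hg, n, rfl⟩
    · exact ⟨1, one_mem _, isUnit_one, by
        rw [mul_one]; exact algebraMap_mem_genSubring X ha⟩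
    · exact ⟨1, one_mem _, isUnit_one, by rw [mul_one]; exact iterate_mem_genSubring hg n⟩
    · have h1 : σ'^[n] b * σ'^[n] c = 1 := by
        rw [← iterate_map_mul, hbc, iterate_map_one]
      rw [mem_singleton_iff.1 hg]
      exact ⟨σ'^[n] b, hσb n, IsUnit.of_mul_eq_one _ h1, by rw [mul_comm, h1]; exact one_mem _⟩
  | zero => exact ⟨1, one_mem _, isUnit_one, by rw [zero_mul]; exact zero_mem _⟩
  | one => exact ⟨1, one_mem _, isUnit_one, by rw [mul_one]; exact one_mem _⟩
  | neg v _ hv =>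
    obtain ⟨u, hu, hu', h⟩ := hv
    exact ⟨u, hu, hu', by rw [neg_mul]; exact neg_mem h⟩
  | add v w _ _ hv hw =>
    obtain ⟨u, hu, hu', h⟩ := hv
    obtain ⟨u₁, hu₁, hu₁', h₁⟩ := hw
    refine ⟨u * u₁, mul_mem hu hu₁, hu'.mul hu₁', ?_⟩
    rw [show (v + w) * (u * u₁) = v * u * u₁ + w * u₁ * u by ring]
    exact add_mem (mul_mem h hu₁) (mul_mem h₁ hu)
  | mul v w _ _ hv hw =>
    obtain ⟨u, hu, hu', h⟩ := hv
    obtain ⟨u₁, hu₁, hu₁', h₁⟩ := hw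
    refine ⟨u * u₁, mul_mem hu hu₁, hu'.mul hu₁', ?_⟩
    rw [mul_mul_mul_comm]
    exact mul_mem h h₁

theorem constants_constrained {K R : Type*} {M : Type u} [Field K] [CommRing R] [Field M]
    [Algebra K R] [Algebra K M] (φ σ : K →+* K) (hcomm : φ.comp σ = σ.comp φ)
    (hper : ∀ (a : K) (m : ℕ), 1 ≤ m → φ^[m] a = a → φ a = a)
    (honto : ∀ a : K, φ a = a → ∃ b : K, φ b = b ∧ σ b = a)
    (Φ σ' : R →+* R) (hcommR : Φ.comp σ' = σ'.comp Φ)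
    (hΦ : ∀ a : K, Φ (algebraMap K R a) = algebraMap K R (φ a))
    (hσ : ∀ a : K, σ' (algebraMap K R a) = algebraMap K R (σ a))
    (hsimple : DiffSimple Φ)
    (π : R →ₐ[K] M) (ψ τ : M →+* M) {m e : ℕ} (hm : 1 ≤ m)
    (hψ : ∀ x, ψ (π x) = π (Φ^[m] x)) (hτ : ∀ x, τ (π x) = π (σ'^[e] x))
    (z : ℕ → R) {P : ℕ} (hP : 1 ≤ P) (hz : ∀ n, σ'^[e] (z n) = z (n + P))
    (hgen : Algebra.adjoin K (range z) = ⊤) (X : Set R) (hX : ∀ x ∈ X, Φ x = x) :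
    ∃ b c : R, Φ b = b ∧ Φ c = c ∧ b * c = 1 ∧ b ≠ 0 ∧
      ∀ σV : genSubring φ σ' (X ∪ {c}) →+* genSubring φ σ' (X ∪ {c}),
        ∀ p : Ideal (genSubring φ σ' (X ∪ {c})), PseudoPrime σV p → p = ⊥ := by
  let k := fixedField φ
  let i : K →ₐ[k] M := (Algebra.ofId K M).restrictScalars k
  have hi : ∀ a, i a = π (algebraMap K R a) := fun a => (π.commutes a).symm
  let A : Subalgebra k R :=
    { genSubring φ σ' X with
      algebraMap_mem' := fun c => algebraMap_mem_genSubring X c.2 }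
  have hA : ∀ {x}, x ∈ A ↔ x ∈ genSubring φ σ' X := Iff.rfl
  have hAfix : ∀ a : A, Φ a = a := fun a => map_eq_of_mem_genSubring hΦ hcommR hX a.2
  let j : A →ₐ[k] M := (π.restrictScalars k).comp A.val
  have hj : Function.Injective j := by
    rw [injective_iff_map_eq_zero]
    intro a ha
    exact Subtype.ext (eq_zero_of_map_eq_zero (fun _ => hsimple.exists_mul_eq_one)
      (π : R →+* M) (hAfix a) ha)
  have hAiter : ∀ n, ∀ x ∈ A, σ'^[n] x ∈ A := by
    intro n
    induction n with
    | zero => exact fun _ h => h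
    | succ n ih =>
      intro x hx
      rw [Function.iterate_succ_apply']
      exact map_mem_genSubring hcomm hσ (ih x hx)
  let ς : k →+* k := (σ ^ e).restrict k k fun a ha => by
    rw [RingHom.coe_pow]
    exact iterate_map_of_comm hcomm ha e
  let α : A →+* A := (σ' ^ e).restrict A A fun a ha => by
    rw [RingHom.coe_pow]
    exact hAiter e a ha
  have hα : ∀ a, ((α a : A) : R) = σ'^[e] a := fun a => congrFun (RingHom.coe_pow σ' e) a.1
  have hαn : ∀ (n : ℕ) a, ((α^[n] a : A) : R) = σ'^[e * n] a := by
    intro n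
    induction n with
    | zero => exact fun _ => rfl
    | succ n ih =>
      intro a
      rw [Function.iterate_succ_apply, ih, hα, ← Function.iterate_add_apply, Nat.mul_succ]
  obtain ⟨b, hb, h⟩ := exists_place_of_constants (powAlgHom φ m)
    (fun l a hl ha => ⟨⟨a, hper a (m * l) (Nat.mul_pos hm hl)
      (by rwa [← powAlgHom_pow_apply])⟩, rfl⟩) i j hj ψ
    (fun a => by
      rw [hi, hψ, hi, powAlgHom_apply, Function.Semiconj.iterate_right
        (f := algebraMap K R) (ga := φ) (gb := Φ) (fun a => (hΦ a).symm) m a])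
    (fun a => (hψ a).trans (congrArg π (Function.iterate_fixed (hAfix a) m)))
    (σ ^ e) ς (fun _ => rfl)
    (by
      rintro ⟨a, ha⟩
      obtain ⟨c, hc, rfl⟩ := exists_iterate_eq_of_surjOn (s := {a | φ a = a}) honto e a ha
      exact ⟨⟨c, hc⟩, Subtype.ext (congrFun (RingHom.coe_pow σ e) c)⟩)
    α τ
    (fun a => by
      rw [hi, hi, hτ, RingHom.coe_pow, Function.Semiconj.iterate_right
        (f := algebraMap K R) (ga := σ) (gb := σ') (fun a => (hσ a).symm) e a])
    (fun a => (hτ a).trans (congrArg π (hα a).symm))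
    (fun n => π (z n)) hP (fun n => by rw [hτ, hz])
  have hb0 : (b : R) ≠ 0 := fun h => hb (Subtype.ext h)
  obtain ⟨c, hc, hbc⟩ := hsimple.exists_mul_eq_one (hAfix b) hb0
  refine ⟨b, c, hAfix b, hc, hbc, hb0, ?_⟩
  rintro σV p ⟨d, hd, q, hq, -, rfl⟩
  let f : A →+* genSubring φ σ' (X ∪ {c}) := Subring.inclusion (genSubring_mono subset_union_left)
  have hf : ∀ a, (f a : R) = a := fun _ => rfl
  have hqbot : q.comap f = ⊥ := by
    let J : Ideal R := (q.comap f).map A.val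
    have hJ : J = ⊥ := by
      refine hsimple.eq_bot_of_mem (fun x hx => ?_) fun h1 => ?_
      · have hle : J ≤ J.comap Φ := Ideal.map_le_iff_le_comap.2 fun a ha => by
          change Φ a ∈ J
          rw [hAfix]
          exact Ideal.mem_map_of_mem A.val ha
        exact hle hx
      · obtain ⟨κ, _, 𝔭, hK, hzr, hval⟩ := h (q.comap f) fun n hn => by
          have hcn : σ'^[e * n] c ∈ genSubring φ σ' (X ∪ {c}) :=
            iterate_mem_genSubring (mem_union_right X (mem_singleton c)) _
          refine hq.ne_top ((Ideal.eq_top_iff_one _).2 ?_)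
          have h1 : f (α^[n] b) * ⟨_, hcn⟩ = 1 := by
            apply Subtype.ext
            change (f (α^[n] b) : R) * σ'^[e * n] c = 1
            rw [hf, hαn, ← iterate_map_mul, hbc, iterate_map_one]
          rw [← h1]
          exact Ideal.mul_mem_right _ _ hn
        have hring : ∀ x, π x ∈ 𝔭.ring := by
          intro x
          have hx : x ∈ Algebra.adjoin K (range z) := hgen ▸ Algebra.mem_top
          induction hx using Algebra.adjoin_induction with
          | mem x hx =>
            obtain ⟨n, rfl⟩ := hx
            exact hzr n
          | algebraMap a => rw [← hi]; exact hK a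
          | add x y _ _ hx hy => rw [map_add]; exact add_mem hx hy
          | mul x y _ _ hx hy => rw [map_mul]; exact mul_mem hx hy
        let r : R →+* κ := 𝔭.res.comp ((π : R →+* M).codRestrict 𝔭.ring hring)
        have hle : J ≤ RingHom.ker r := Ideal.map_le_iff_le_comap.2 fun a ha =>
          (𝔭.val_of_mem (hring a)).symm.trans (hval a ha).2
        exact one_ne_zero ((map_one r).symm.trans (RingHom.mem_ker.1 (hle h1)))
    rw [eq_bot_iff]
    intro a ha
    have : (a : R) ∈ J := Ideal.mem_map_of_mem A.val ha
    rw [hJ] at this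
    exact Subtype.ext this
  have hq0 : q = ⊥ := by
    rw [eq_bot_iff]
    intro v hv
    obtain ⟨u, hu, huu, hvu⟩ := exists_isUnit_mul_mem_genSubring
      (fun n => hAiter n b b.2) hbc v.2
    have h1 : (⟨_, hvu⟩ : A) ∈ q.comap f :=
      Ideal.mem_comap.2 ((congrArg (· ∈ q) (Subtype.ext rfl :
        f ⟨_, hvu⟩ = v * f ⟨u, hu⟩)).mpr (Ideal.mul_mem_right _ _ hv))
    rw [hqbot] at h1
    exact Subtype.ext ((huu.mul_left_eq_zero).1 (congrArg Subtype.val h1))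
  rw [eq_bot_iff]
  refine (iInf₂_le 0 (Finset.mem_range.2 hd)).trans ?_
  rw [pow_zero, hq0]
  exact fun x hx => hx

end

/-- New `φ`-constants are constrained: let `K` be a `φσ`-field with `K^{φ^∞} = K^φ` and
`σ : K^φ → K^φ` surjective, and let `R` be a `φ`-simple `K`-`φσ`-algebra that is a
`φ`-pseudo domain and finitely `σ`-generated over `K`.  Then `R^Φ` is a `σ`-field which is
finitely `σ`-generated and constrained over `k = K^φ`. -/
theorem constants_constrained_of_finitely_sigma_generated
    {K R : Type*} [Field K] [CommRing R] [Algebra K R]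
    (φ σ : K →+* K) (hcomm : φ.comp σ = σ.comp φ)
    (hper : ∀ (a : K) (m : ℕ), 1 ≤ m → (⇑φ)^[m] a = a → φ a = a)
    (honto : ∀ a : K, φ a = a → ∃ b : K, φ b = b ∧ σ b = a)
    (Φ σ' : R →+* R) (hcommR : Φ.comp σ' = σ'.comp Φ)
    (hΦ : ∀ a : K, Φ (algebraMap K R a) = algebraMap K R (φ a))
    (hσ : ∀ a : K, σ' (algebraMap K R a) = algebraMap K R (σ a))
    (hsimple : DiffSimple Φ) (hdom : PseudoDomain Φ)
    (hfin : ∃ T : Finset R,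
      Algebra.adjoin K {x : R | ∃ t ∈ T, ∃ n : ℕ, (⇑σ')^[n] t = x} = ⊤) :
    -- (1) `R^Φ` is a field, stable under `σ'`
    ((0 : R) ≠ 1 ∧ ∀ x : R, Φ x = x → x ≠ 0 → ∃ y : R, Φ y = y ∧ x * y = 1) ∧
    (∀ x : R, Φ x = x → Φ (σ' x) = σ' x) ∧
    -- (2) `R^Φ` is finitely `σ`-generated as a `σ`-field extension of `k`
    (∃ S : Finset R, (∀ s ∈ S, Φ s = s) ∧
      ∀ x : R, Φ x = x → ∃ a b : R,
        a ∈ genSubring φ σ' (↑S : Set R) ∧ b ∈ genSubring φ σ' (↑S : Set R) ∧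
        b ≠ 0 ∧ x * b = a) ∧
    -- (3) `R^Φ` is constrained over `k`
    (∀ (m : ℕ) (c : Fin m → R), (∀ j, Φ (c j) = c j) →
      ∃ b binv : R, Φ b = b ∧ Φ binv = binv ∧ b * binv = 1 ∧ b ≠ 0 ∧
        ∃ σV : ↥(genSubring φ σ' (Set.range c ∪ {binv})) →+*
               ↥(genSubring φ σ' (Set.range c ∪ {binv})),
          (∀ v : ↥(genSubring φ σ' (Set.range c ∪ {binv})), ((σV v : R)) = σ' ↑v) ∧
          ∀ p : Ideal ↥(genSubring φ σ' (Set.range c ∪ {binv})),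
            PseudoPrime σV p → p = ⊥) := by
  classical
  have hinv : ∀ x, Φ x = x → x ≠ 0 → ∃ y, Φ y = y ∧ x * y = 1 :=
    fun _ => hsimple.exists_mul_eq_one
  have : Nontrivial R := by
    by_contra h
    rw [not_nontrivial_iff_subsingleton] at h
    exact hsimple.1 (Subsingleton.elim _ _)
  obtain ⟨p, hp⟩ := Ideal.nonempty_minimalPrimes (bot_ne_top : (⊥ : Ideal R) ≠ ⊤)
  have hmin : p ∈ minimalPrimes R := hp
  have : p.IsPrime := hp.1.1
  obtain ⟨m, hm, hpm⟩ := exists_comap_pow_eq_of_mem_minimalPrimes hdom.finite_minimalPrimes Φ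
    (hsimple.injective_of_comm rfl) hmin
  obtain ⟨e, he, hpe⟩ := exists_comap_pow_eq_of_mem_minimalPrimes hdom.finite_minimalPrimes σ'
    (hsimple.injective_of_comm hcommR) hmin
  obtain ⟨ψ, hψ⟩ := exists_ringHom_fractionRing_quotient p (Φ ^ m) hpm
  obtain ⟨τ, hτ⟩ := exists_ringHom_fractionRing_quotient p (σ' ^ e) hpe
  rw [RingHom.coe_pow] at hψ hτ
  obtain ⟨T, hT⟩ := hfin
  obtain ⟨N, z, hN, hz, hzT⟩ := exists_sequence_of_finset σ' T
  have hze : ∀ l n, σ'^[l] (z n) = z (n + l * N) := by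
    intro l
    induction l with
    | zero => exact fun n => by simp
    | succ l ih =>
      intro n
      rw [Function.iterate_succ_apply', ih, hz, Nat.succ_mul, add_assoc]
  have hgen : Algebra.adjoin K (Set.range z) = ⊤ := by
    refine top_le_iff.1 (hT.ge.trans (Algebra.adjoin_mono ?_))
    rintro _ ⟨t, ht, n, rfl⟩
    exact hzT t ht n
  let π : R →ₐ[K] FractionRing (R ⧸ p) := IsScalarTower.toAlgHom K R _
  refine ⟨⟨zero_ne_one, hinv⟩, fun x hx => iterate_map_of_comm hcommR hx 1,
    exists_finset_generators_constants φ σ hper Φ σ' hcommR hΦ hσ hinv π ψ τ hm hψ hτ z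
      (Nat.mul_pos he hN) (hze e) hgen, fun n c hc => ?_⟩
  obtain ⟨b, b', hb, hb', hbb, hb0, h⟩ := constants_constrained φ σ hcomm hper honto Φ σ' hcommR
    hΦ hσ hsimple π ψ τ hm hψ hτ z (Nat.mul_pos he hN) (hze e) hgen (Set.range c)
    (by rintro _ ⟨j, rfl⟩; exact hc j)
  exact ⟨b, b', hb, hb', hbb, hb0, σ'.restrict _ _ fun _ hx => map_mem_genSubring hcomm hσ hx,
    fun _ => rfl, h _⟩
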